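/- Let S be a quasi-hereditary algebra with Ringel dual S'. For every λ ∈ Λ⁺, the injective dimension of the costandard module ∇(λ) of S equals the ∇-filtration dimension of the standard module Δ'(λ) of S': inj(∇(λ)) = gfd(Δ'(λ)). -/

import Mathlib

/-!
Common definitions for formalizing "On the global and ∇-filtration dimensions of
quasi-hereditary algebras" by Erdmann and Parker.

We work with a finite-dimensional algebra `S` over a field `k`; since `S` is
finite dimensional over `k`, the finite-dimensional `S`-modules are exactly the
finitely generated ones, so we express finite-dimensionality of a module `M` as
`Module.Finite S M`.
-/

open CategoryTheory

namespace QHPaper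

variable (S : Type) [Ring S]

/-- The subquotient `B ⧸ A` associated to two submodules `A B` of `M`. -/
abbrev subquot {M : ModuleCat.{0} S} (A B : Submodule S ↥M) : Type :=
  ↥B ⧸ (Submodule.comap B.subtype A)

/-- A filtration `⊥ = f 0 ≤ f 1 ≤ ⋯ ≤ f n = ⊤` of `M` whose `i`-th section
`f (i+1) / f i` is isomorphic to the prescribed module `D i`. -/
def HasFiltrationWithSections (M : ModuleCat.{0} S) (n : ℕ)
    (f : Fin (n + 1) → Submodule S ↥M) (D : Fin n → ModuleCat.{0} S) : Prop :=
  Monotone f ∧ f 0 = ⊥ ∧ f (Fin.last n) = ⊤ ∧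
    ∀ i : Fin n, Nonempty ((subquot S (f i.castSucc) (f i.succ)) ≃ₗ[S] ↥(D i))

/-- `L` occurs as a (simple) subquotient of `M`; for `L` simple this says that `L`
is a composition factor of `M`. -/
def IsCompFactor (L M : ModuleCat.{0} S) : Prop :=
  ∃ (A B : Submodule S ↥M), A ≤ B ∧ Nonempty ((subquot S A B) ≃ₗ[S] ↥L)

/-- `L` occurs with multiplicity `m` among the sections of a composition series of `M`. -/
def CompFactorMult (L M : ModuleCat.{0} S) (m : ℕ) : Prop :=
  ∃ (n : ℕ) (f : Fin (n + 1) → Submodule S ↥M),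
    Monotone f ∧ f 0 = ⊥ ∧ f (Fin.last n) = ⊤ ∧
    (∀ i : Fin n, IsSimpleModule S (subquot S (f i.castSucc) (f i.succ))) ∧
    Nat.card {i : Fin n // Nonempty ((subquot S (f i.castSucc) (f i.succ)) ≃ₗ[S] ↥L)} = m

/-- `P` is a projective cover of `M`: `P` is projective and there is a surjection
`P → M` whose kernel is superfluous in `P`. -/
def IsProjCover (P M : ModuleCat.{0} S) : Prop :=
  Module.Projective S ↥P ∧ ∃ π : ↥P →ₗ[S] ↥M, Function.Surjective π ∧
    ∀ N : Submodule S ↥P, N ⊔ LinearMap.ker π = ⊤ → N = ⊤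

/-- `I` is an injective hull of `M`: `I` is injective and there is an injection
`M → I` with essential image. -/
def IsInjHull (I M : ModuleCat.{0} S) : Prop :=
  Module.Injective S ↥I ∧ ∃ ι : ↥M →ₗ[S] ↥I, Function.Injective ι ∧
    ∀ N : Submodule S ↥I, N ⊓ LinearMap.range ι = ⊥ → N = ⊥

/-- The data of a quasi-hereditary algebra structure on `S` with weight poset `Λ`:
a full set `L` of pairwise non-isomorphic simple modules, their projective covers `P`
and injective hulls `I`, the standard modules `std` (largest quotient of `P lam` with
all composition factors `L mu`, `mu ≤ lam`), the costandard modules `costd`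
(largest submodule of `I lam` with all composition factors `L mu`, `mu ≤ lam`),
such that `L lam` occurs exactly once in `std lam` and `P lam` is filtered by
standard modules `std mu` with `mu ≥ lam`, with `std lam` occurring exactly once. -/
structure QHData (Λ : Type) [Fintype Λ] [PartialOrder Λ] where
  L : Λ → ModuleCat.{0} S
  P : Λ → ModuleCat.{0} S
  I : Λ → ModuleCat.{0} S
  std : Λ → ModuleCat.{0} S
  costd : Λ → ModuleCat.{0} S
  finiteL : ∀ lam, Module.Finite S ↥(L lam)
  simpleL : ∀ lam, IsSimpleModule S ↥(L lam)
  nonisoL : ∀ lam mu, lam ≠ mu → IsEmpty (↥(L lam) ≃ₗ[S] ↥(L mu))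
  fullL : ∀ M : ModuleCat.{0} S, IsSimpleModule S ↥M → ∃ lam, Nonempty (↥M ≃ₗ[S] ↥(L lam))
  projCover : ∀ lam, IsProjCover S (P lam) (L lam)
  injHull : ∀ lam, IsInjHull S (I lam) (L lam)
  stdSpec : ∀ lam, ∃ K : Submodule S ↥(P lam),
    Nonempty (↥(std lam) ≃ₗ[S] (↥(P lam) ⧸ K)) ∧
    (∀ mu, IsCompFactor S (L mu) (ModuleCat.of S (↥(P lam) ⧸ K)) → mu ≤ lam) ∧
    ∀ K' : Submodule S ↥(P lam),
      (∀ mu, IsCompFactor S (L mu) (ModuleCat.of S (↥(P lam) ⧸ K')) → mu ≤ lam) → K ≤ K'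
  costdSpec : ∀ lam, ∃ V : Submodule S ↥(I lam),
    Nonempty (↥(costd lam) ≃ₗ[S] ↥V) ∧
    (∀ mu, IsCompFactor S (L mu) (ModuleCat.of S ↥V) → mu ≤ lam) ∧
    ∀ V' : Submodule S ↥(I lam),
      (∀ mu, IsCompFactor S (L mu) (ModuleCat.of S ↥V') → mu ≤ lam) → V' ≤ V
  multOne : ∀ lam, CompFactorMult S (L lam) (std lam) 1
  projFilt : ∀ lam, ∃ (n : ℕ) (f : Fin (n + 1) → Submodule S ↥(P lam)) (g : Fin n → Λ),
    HasFiltrationWithSections S (P lam) n f (fun i => std (g i)) ∧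
    (∀ i, lam ≤ g i) ∧ Nat.card {i : Fin n // g i = lam} = 1

variable {Λ : Type} [Fintype Λ] [PartialOrder Λ]

/-- `M` has a filtration with costandard sections, i.e. `M ∈ F(∇)`. -/
def InCostdFilt (Q : QHData S Λ) (M : ModuleCat.{0} S) : Prop :=
  ∃ (n : ℕ) (f : Fin (n + 1) → Submodule S ↥M) (g : Fin n → Λ),
    HasFiltrationWithSections S M n f (fun i => Q.costd (g i))

/-- `M` has a filtration with standard sections, i.e. `M ∈ F(Δ)`. -/
def InStdFilt (Q : QHData S Λ) (M : ModuleCat.{0} S) : Prop :=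
  ∃ (n : ℕ) (f : Fin (n + 1) → Submodule S ↥M) (g : Fin n → Λ),
    HasFiltrationWithSections S M n f (fun i => Q.std (g i))

/-- `0 → N 0 → N 1 → ⋯ → N (n+1) → 0` is exact. -/
def IsExactSeq (n : ℕ) (N : Fin (n + 2) → ModuleCat.{0} S)
    (f : ∀ i : Fin (n + 1), ↥(N i.castSucc) →ₗ[S] ↥(N i.succ)) : Prop :=
  Function.Injective (f 0) ∧ Function.Surjective (f (Fin.last n)) ∧
    ∀ i : Fin n, LinearMap.range (f i.castSucc) = LinearMap.ker (f i.succ)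

/-- `M` has a ∇-resolution (co-resolution by modules in `F(∇)`) of length `d`:
`0 → M → M₀ → ⋯ → M_d → 0` with each `Mᵢ ∈ F(∇)`. -/
def GfdLE (Q : QHData S Λ) (M : ModuleCat.{0} S) (d : ℕ) : Prop :=
  ∃ (N : Fin (d + 2) → ModuleCat.{0} S)
    (f : ∀ i : Fin (d + 1), ↥(N i.castSucc) →ₗ[S] ↥(N i.succ)),
    IsExactSeq S d N f ∧ N 0 = M ∧ ∀ i : Fin (d + 1), InCostdFilt S Q (N i.succ)

/-- The ∇-filtration dimension (good filtration dimension) of a module. -/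
noncomputable def gfd (Q : QHData S Λ) (M : ModuleCat.{0} S) : ℕ :=
  sInf {d | GfdLE S Q M d}

/-- `M` has a resolution `0 → M_d → ⋯ → M₀ → M → 0` with each `Mᵢ ∈ F(Δ)`. -/
def WfdLE (Q : QHData S Λ) (M : ModuleCat.{0} S) (d : ℕ) : Prop :=
  ∃ (N : Fin (d + 2) → ModuleCat.{0} S)
    (f : ∀ i : Fin (d + 1), ↥(N i.castSucc) →ₗ[S] ↥(N i.succ)),
    IsExactSeq S d N f ∧ N (Fin.last (d + 1)) = M ∧
    ∀ i : Fin (d + 1), InStdFilt S Q (N i.castSucc)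

/-- The Δ-filtration dimension of a module. -/
noncomputable def wfd (Q : QHData S Λ) (M : ModuleCat.{0} S) : ℕ :=
  sInf {d | WfdLE S Q M d}

/-- `M` has a projective resolution of length `d`. -/
def ProjdimLE (M : ModuleCat.{0} S) (d : ℕ) : Prop :=
  ∃ (N : Fin (d + 2) → ModuleCat.{0} S)
    (f : ∀ i : Fin (d + 1), ↥(N i.castSucc) →ₗ[S] ↥(N i.succ)),
    IsExactSeq S d N f ∧ N (Fin.last (d + 1)) = M ∧
    ∀ i : Fin (d + 1), Module.Projective S ↥(N i.castSucc)

/-- The projective dimension of a module. -/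
noncomputable def projdim (M : ModuleCat.{0} S) : ℕ :=
  sInf {d | ProjdimLE S M d}

/-- `M` has an injective resolution of length `d`. -/
def InjdimLE (M : ModuleCat.{0} S) (d : ℕ) : Prop :=
  ∃ (N : Fin (d + 2) → ModuleCat.{0} S)
    (f : ∀ i : Fin (d + 1), ↥(N i.castSucc) →ₗ[S] ↥(N i.succ)),
    IsExactSeq S d N f ∧ N 0 = M ∧
    ∀ i : Fin (d + 1), Module.Injective S ↥(N i.succ)

/-- The injective dimension of a module. -/
noncomputable def injdim (M : ModuleCat.{0} S) : ℕ :=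
  sInf {d | InjdimLE S M d}

/-- `gfd(S)`: the supremum of the ∇-filtration dimensions of all
finite-dimensional `S`-modules. -/
noncomputable def gfdAlg (Q : QHData S Λ) : ℕ :=
  sSup {d | ∃ M : ModuleCat.{0} S, Module.Finite S ↥M ∧ gfd S Q M = d}

/-- `wfd(S)`: the supremum of the Δ-filtration dimensions of all
finite-dimensional `S`-modules. -/
noncomputable def wfdAlg (Q : QHData S Λ) : ℕ :=
  sSup {d | ∃ M : ModuleCat.{0} S, Module.Finite S ↥M ∧ wfd S Q M = d}

/-- The global dimension of `S`: the supremum of the projective dimensions of all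
finite-dimensional `S`-modules. -/
noncomputable def globdim : ℕ :=
  sSup {d | ∃ M : ModuleCat.{0} S, Module.Finite S ↥M ∧ projdim S M = d}

/-- `Ext^n_S(A, B) ≠ 0`. -/
noncomputable def extNe (A B : ModuleCat.{0} S) (n : ℕ) : Prop :=
  Nontrivial ↥(((Ext ℤ (ModuleCat.{0} S) n).obj (Opposite.op A)).obj B)

/-- A simple-preserving duality on `S`: a contravariant, exact, fully faithful,
additive self-functor `D` on the category of finite-dimensional `S`-modules with
`D (D M) ≅ M` and `D (L lam) ≅ L lam` for all `lam`. -/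
structure Duality (Q : QHData S Λ) where
  D : ModuleCat.{0} S → ModuleCat.{0} S
  Dmap : ∀ {A B : ModuleCat.{0} S}, (↥A →ₗ[S] ↥B) → (↥(D B) →ₗ[S] ↥(D A))
  finD : ∀ M : ModuleCat.{0} S, Module.Finite S ↥M → Module.Finite S ↥(D M)
  Did : ∀ A : ModuleCat.{0} S, Module.Finite S ↥A →
    Dmap (LinearMap.id : ↥A →ₗ[S] ↥A) = LinearMap.id
  Dcomp : ∀ {A B C : ModuleCat.{0} S}, Module.Finite S ↥A → Module.Finite S ↥B →
    Module.Finite S ↥C → ∀ (f : ↥A →ₗ[S] ↥B) (g : ↥B →ₗ[S] ↥C),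
      Dmap (g ∘ₗ f) = Dmap f ∘ₗ Dmap g
  Dadd : ∀ {A B : ModuleCat.{0} S}, Module.Finite S ↥A → Module.Finite S ↥B →
    ∀ (f g : ↥A →ₗ[S] ↥B), Dmap (f + g) = Dmap f + Dmap g
  Dfull : ∀ {A B : ModuleCat.{0} S}, Module.Finite S ↥A → Module.Finite S ↥B →
    Function.Bijective (fun f : ↥A →ₗ[S] ↥B => Dmap f)
  Dexact : ∀ {A B C : ModuleCat.{0} S}, Module.Finite S ↥A → Module.Finite S ↥B →
    Module.Finite S ↥C → ∀ (f : ↥A →ₗ[S] ↥B) (g : ↥B →ₗ[S] ↥C),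
      Function.Injective f → Function.Surjective g →
      LinearMap.range f = LinearMap.ker g →
      Function.Injective (Dmap g) ∧ Function.Surjective (Dmap f) ∧
        LinearMap.range (Dmap g) = LinearMap.ker (Dmap f)
  Dinvol : ∀ M : ModuleCat.{0} S, Module.Finite S ↥M → Nonempty (↥(D (D M)) ≃ₗ[S] ↥M)
  DL : ∀ lam, Nonempty (↥(D (Q.L lam)) ≃ₗ[S] ↥(Q.L lam))

/-- Strong property A: `mu < lam` implies `gfd (L mu) < gfd (L lam)`. -/
def StrongPropA (Q : QHData S Λ) : Prop :=
  ∀ mu lam : Λ, mu < lam → gfd S Q (Q.L mu) < gfd S Q (Q.L lam)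

/-- Property A: `mu < lam` implies `gfd (L mu) ≤ gfd (L lam)`. -/
def PropA (Q : QHData S Λ) : Prop :=
  ∀ mu lam : Λ, mu < lam → gfd S Q (Q.L mu) ≤ gfd S Q (Q.L lam)

/-- Property B: `mu < lam` implies `wfd (∇ mu) ≤ wfd (∇ lam)`. -/
def PropB (Q : QHData S Λ) : Prop :=
  ∀ mu lam : Λ, mu < lam → wfd S Q (Q.costd mu) ≤ wfd S Q (Q.costd lam)

/-- Property C: `wfd (∇ lam) = gfd S - inj (∇ lam)` for all `lam`. -/
def PropC (Q : QHData S Λ) : Prop :=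
  ∀ lam : Λ, wfd S Q (Q.costd lam) = gfdAlg S Q - injdim S (Q.costd lam)

/-- Property D: `wfd (∇ lam) = wfd (L lam)` for all `lam`. -/
def PropD (Q : QHData S Λ) : Prop :=
  ∀ lam : Λ, wfd S Q (Q.costd lam) = wfd S Q (Q.L lam)

/-- Property E: `mu < lam` implies `inj (∇ mu) ≥ inj (∇ lam)`. -/
def PropE (Q : QHData S Λ) : Prop :=
  ∀ mu lam : Λ, mu < lam → injdim S (Q.costd lam) ≤ injdim S (Q.costd mu)

/-- The partial order is minimal for the quasi-hereditary structure: whenever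
`mu < lam` are adjacent, `L mu` is a composition factor of `Δ lam` or of `∇ lam`. -/
def MinimalOrder (Q : QHData S Λ) : Prop :=
  ∀ mu lam : Λ, mu < lam → (¬ ∃ nu, mu < nu ∧ nu < lam) →
    IsCompFactor S (Q.L mu) (Q.std lam) ∨ IsCompFactor S (Q.L mu) (Q.costd lam)

/-- `S` is connected (indecomposable as an algebra, i.e. one block): the only
central idempotents are `0` and `1`. -/
def ConnectedRing : Prop :=
  ∀ c : S, c * c = c → (∀ s : S, c * s = s * c) → c = 0 ∨ c = 1

/-- A tilting module: a module in `F(Δ) ∩ F(∇)`. -/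
def IsTilting (Q : QHData S Λ) (T : ModuleCat.{0} S) : Prop :=
  InStdFilt S Q T ∧ InCostdFilt S Q T

/-- The indecomposable tilting module `T(lam)`: an indecomposable tilting module in
which `L lam` occurs exactly once and all other composition factors `L mu` have
`mu < lam`. -/
def IsIndecTilting (Q : QHData S Λ) (lam : Λ) (T : ModuleCat.{0} S) : Prop :=
  IsTilting S Q T ∧ Nontrivial ↥T ∧
    (∀ A B : Submodule S ↥T, IsCompl A B → A = ⊥ ∨ B = ⊥) ∧
    CompFactorMult S (Q.L lam) T 1 ∧
    ∀ mu, IsCompFactor S (Q.L mu) T → mu = lam ∨ mu < lam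

/-- A full tilting module: a (finite-dimensional) tilting module having every
indecomposable tilting module as a direct summand. -/
def IsFullTilting (Q : QHData S Λ) (T : ModuleCat.{0} S) : Prop :=
  IsTilting S Q T ∧ Module.Finite S ↥T ∧
    ∀ (lam : Λ) (Tl : ModuleCat.{0} S), IsIndecTilting S Q lam Tl →
      ∃ Cc : ModuleCat.{0} S, Nonempty (↥T ≃ₗ[S] (↥Tl × ↥Cc))

/-- The Ringel dual ring `S' = End_S(T)^op`. -/
abbrev RingelDualRing (T : ModuleCat.{0} S) : Type := (Module.End S ↥T)ᵐᵒᵖ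

/-- `Hom_S(T, X)` is a module over `S' = End_S(T)^op` via `f • φ = φ ∘ f`. -/
instance homTModule (T X : ModuleCat.{0} S) :
    Module (RingelDualRing S T) (↥T →ₗ[S] ↥X) where
  smul a φ := φ ∘ₗ a.unop
  one_smul φ := rfl
  mul_smul a b φ := rfl
  smul_zero a := rfl
  smul_add a φ ψ := rfl
  add_smul a b φ := by
    ext x
    show φ ((a.unop + b.unop) x) = φ (a.unop x) + φ (b.unop x)
    rw [LinearMap.add_apply, map_add]
  zero_smul φ := by
    ext x
    show φ ((0 : Module.End S ↥T) x) = 0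
    rw [LinearMap.zero_apply, map_zero]

/-- The `S'`-module `Hom_S(T, X)`, i.e. the image of `X` under the functor
`F = Hom_S(T, -)`. -/
noncomputable def homTMod (T X : ModuleCat.{0} S) :
    ModuleCat.{0} (RingelDualRing S T) :=
  ModuleCat.of (RingelDualRing S T) (↥T →ₗ[S] ↥X)

/-- `Q'` is a Ringel dual quasi-hereditary structure for `(Q, T)`:
`T` is a full tilting module, `Q'` is a quasi-hereditary structure on
`S' = End_S(T)^op` for the opposite poset, and its standard modules are
`Δ'(lam) = Hom_S(T, ∇(lam))`. -/
def IsRingelDualData (Q : QHData S Λ) (T : ModuleCat.{0} S)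
    (Q' : QHData (RingelDualRing S T) Λᵒᵈ) : Prop :=
  IsFullTilting S Q T ∧
    ∀ lam : Λ, Nonempty
      (↥(Q'.std (OrderDual.toDual lam)) ≃ₗ[RingelDualRing S T]
        (↥T →ₗ[S] ↥(Q.costd lam)))

/-- `0 → T_d → ⋯ → T_0 → M → 0` exact with all `T_i` tilting modules. -/
def TiltResLE (Q : QHData S Λ) (M : ModuleCat.{0} S) (d : ℕ) : Prop :=
  ∃ (N : Fin (d + 2) → ModuleCat.{0} S)
    (f : ∀ i : Fin (d + 1), ↥(N i.castSucc) →ₗ[S] ↥(N i.succ)),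
    IsExactSeq S d N f ∧ N (Fin.last (d + 1)) = M ∧
    ∀ i : Fin (d + 1), IsTilting S Q (N i.castSucc)

/-- An idempotent `e` is primitive if it is nonzero and is not the sum of two
nonzero orthogonal idempotents. -/
def IsPrimitiveIdempotent (e : S) : Prop :=
  e * e = e ∧ e ≠ 0 ∧ ∀ a b : S, a * a = a → b * b = b → a * b = 0 → b * a = 0 →
    e = a + b → a = 0 ∨ b = 0

/-- The additive subgroup `e•M = {m | e • m = m}` of `M` (for `e` idempotent). -/
def cornerSet (eG : S) (M : ModuleCat.{0} S) : AddSubgroup ↥M where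
  carrier := {m | eG • m = m}
  add_mem' := by
    intro a b ha hb
    simp only [Set.mem_setOf_eq] at *
    rw [smul_add, ha, hb]
  zero_mem' := by
    simp only [Set.mem_setOf_eq]
    rw [smul_zero]
  neg_mem' := by
    intro a ha
    simp only [Set.mem_setOf_eq] at *
    rw [smul_neg, ha]

/-- The `R`-module structure on `e•M`, where `ι : R → S` identifies `R` with the
corner ring `eSe` (as a non-unital ring, with `ι 1 = e`). -/
def cornerModuleStructure (R : Type) [Ring R] (ι : R →ₙ+* S) (eG : S)
    (hone : ι 1 = eG) (hrange : ∀ r : R, eG * ι r * eG = ι r)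
    (M : ModuleCat.{0} S) : Module R ↥(cornerSet S eG M) where
  smul r m := ⟨ι r • (m : ↥M), by
    have hm : eG • (m : ↥M) = (m : ↥M) := m.2
    show eG • (ι r • (m : ↥M)) = ι r • (m : ↥M)
    have h : eG • (ι r • (m : ↥M)) = (eG * ι r * eG) • (m : ↥M) := by
      rw [mul_assoc, mul_smul, mul_smul, hm]
    rw [h, hrange]⟩
  one_smul m := by
    apply Subtype.ext
    show ι 1 • (m : ↥M) = (m : ↥M)
    rw [hone]
    exact m.2
  mul_smul r s m := by
    apply Subtype.ext
    show ι (r * s) • (m : ↥M) = ι r • (ι s • (m : ↥M))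
    rw [map_mul, mul_smul]
  smul_zero r := by
    apply Subtype.ext
    show ι r • (0 : ↥M) = 0
    rw [smul_zero]
  smul_add r m n := by
    apply Subtype.ext
    show ι r • ((m : ↥M) + (n : ↥M)) = ι r • (m : ↥M) + ι r • (n : ↥M)
    rw [smul_add]
  add_smul r s m := by
    apply Subtype.ext
    show ι (r + s) • (m : ↥M) = ι r • (m : ↥M) + ι s • (m : ↥M)
    rw [map_add, add_smul]
  zero_smul m := by
    apply Subtype.ext
    show ι 0 • (m : ↥M) = 0
    rw [map_zero, zero_smul]

/-- The `R`-module `e•M`, where `R ≅ eSe` via `ι`. -/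
noncomputable def cornerMod (R : Type) [Ring R] (ι : R →ₙ+* S) (eG : S)
    (hone : ι 1 = eG) (hrange : ∀ r : R, eG * ι r * eG = ι r)
    (M : ModuleCat.{0} S) : ModuleCat.{0} R :=
  @ModuleCat.of R _ ↥(cornerSet S eG M) _
    (cornerModuleStructure S R ι eG hone hrange M)

end QHPaper

/-!
The functor `F = Hom(T, -)` carries `∇(l)` to `Δ'(l)` and `T` to the projective generator of `S'`.
The projective cover `P'(l)` of `Δ'(l)` is a retract of `F T`. Full faithfulness on maps out of `T`
realizes it as `F X` for a retract `X` of `T`, and a `∇`-filtration of `X` ends in `∇(l)`, so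
`∇(l)` is the cokernel of a monomorphism `K ⟶ X` with `K` in `F(∇)`. Hence `F` is exact and
faithful on `F(∇)`, and shifting dimensions along these presentations shows that
`Extⁿ⁺¹(F Y, F J) = 0` for `Y` in `F(∇)` and `J` injective.

Let `X` be in `F(∇)`, with injective coresolution `0 ⟶ X ⟶ J₀ ⟶ J₁ ⟶ ⋯`; all its cosyzygies lie
in `F(∇)`, and `F` of it is exact. The bounds `inj X ≤ d` and `gfd (F X) ≤ d` amount to the
vanishing of `Extᵈ⁺¹(-, X)` and of `Extᵈ⁺¹(F ∇(l), F X)` for all `l`. Passing to cosyzygies reduces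
their equivalence to `d = 0`: there `Ext¹(F X', F X) = 0` for the first cosyzygy `X'`, so
`F(0 ⟶ X ⟶ J₀ ⟶ X' ⟶ 0)` splits, and the splitting lifts along `F`, making `X` a retract of `J₀`.
-/

namespace QHPaper

open Limits Abelian

section ExtVanishing

universe w v u

variable {C : Type u} [Category.{v} C] [Abelian C] [HasExt.{w} C] {S : ShortComplex C} {X Y Z : C}
  {n : ℕ}

theorem ext_subsingleton_iff : Subsingleton (Ext X Y n) ↔ ∀ x : Ext X Y n, x = 0 :=
  ⟨fun _ x => Subsingleton.elim x 0, fun h => ⟨fun x y => (h x).trans (h y).symm⟩⟩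

theorem ext_zero_subsingleton_iff : Subsingleton (Ext X Y 0) ↔ ∀ f : X ⟶ Y, f = 0 := by
  rw [(Equiv.ofBijective _ (Ext.mk₀_bijective X Y)).symm.subsingleton_congr]
  exact ⟨fun _ f => Subsingleton.elim f 0, fun h => ⟨fun f g => (h f).trans (h g).symm⟩⟩

theorem ext_subsingleton_X₂_right (hS : S.ShortExact) (h₁ : Subsingleton (Ext X S.X₁ n))
    (h₃ : Subsingleton (Ext X S.X₃ n)) : Subsingleton (Ext X S.X₂ n) := by
  refine ext_subsingleton_iff.2 fun x => ?_
  obtain ⟨y, rfl⟩ := Ext.covariant_sequence_exact₂ X hS x (Subsingleton.elim _ _)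
  rw [Subsingleton.elim y 0, Ext.zero_comp]

theorem ext_subsingleton_X₃_right (hS : S.ShortExact) (h₂ : Subsingleton (Ext X S.X₂ n))
    (h₁ : Subsingleton (Ext X S.X₁ (n + 1))) : Subsingleton (Ext X S.X₃ n) := by
  refine ext_subsingleton_iff.2 fun x => ?_
  obtain ⟨y, rfl⟩ := Ext.covariant_sequence_exact₃ X hS x rfl (Subsingleton.elim _ _)
  rw [Subsingleton.elim y 0, Ext.zero_comp]

theorem ext_subsingleton_X₁_right (hS : S.ShortExact) (h₃ : Subsingleton (Ext X S.X₃ n))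
    (h₂ : Subsingleton (Ext X S.X₂ (n + 1))) : Subsingleton (Ext X S.X₁ (n + 1)) := by
  refine ext_subsingleton_iff.2 fun x => ?_
  obtain ⟨y, rfl⟩ := Ext.covariant_sequence_exact₁ X hS x (Subsingleton.elim _ _) rfl
  rw [Subsingleton.elim y 0, Ext.zero_comp]

theorem ext_subsingleton_X₂_left (hS : S.ShortExact) (h₁ : Subsingleton (Ext S.X₁ Y n))
    (h₃ : Subsingleton (Ext S.X₃ Y n)) : Subsingleton (Ext S.X₂ Y n) := by
  refine ext_subsingleton_iff.2 fun x => ?_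
  obtain ⟨y, rfl⟩ := Ext.contravariant_sequence_exact₂ hS Y x (Subsingleton.elim _ _)
  rw [Subsingleton.elim y 0, Ext.comp_zero]

theorem ext_subsingleton_X₃_left (hS : S.ShortExact) (h₁ : Subsingleton (Ext S.X₁ Y n))
    (h₂ : Subsingleton (Ext S.X₂ Y (n + 1))) : Subsingleton (Ext S.X₃ Y (n + 1)) := by
  refine ext_subsingleton_iff.2 fun x => ?_
  obtain ⟨y, rfl⟩ :=
    Ext.contravariant_sequence_exact₃ hS Y x (Subsingleton.elim _ _) (add_comm 1 n)
  rw [Subsingleton.elim y 0, Ext.comp_zero]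

theorem exists_lift_of_ext_one (hS : S.ShortExact) (h : Subsingleton (Ext X S.X₁ 1))
    (u : X ⟶ S.X₃) : ∃ v : X ⟶ S.X₂, v ≫ S.g = u := by
  obtain ⟨y, hy⟩ := Ext.covariant_sequence_exact₃ X hS (Ext.mk₀ u) rfl (Subsingleton.elim _ _)
  obtain ⟨v, rfl⟩ := (Ext.mk₀_bijective _ _).2 y
  exact ⟨v, (Ext.mk₀_bijective _ _).1 (by rwa [Ext.mk₀_comp_mk₀] at hy)⟩

theorem exists_extension_of_ext_one (hS : S.ShortExact) (h : Subsingleton (Ext S.X₃ Y 1))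
    (u : S.X₁ ⟶ Y) : ∃ v : S.X₂ ⟶ Y, S.f ≫ v = u := by
  obtain ⟨y, hy⟩ :=
    Ext.contravariant_sequence_exact₁ hS Y (Ext.mk₀ u) rfl (Subsingleton.elim _ _)
  obtain ⟨v, rfl⟩ := (Ext.mk₀_bijective _ _).2 y
  exact ⟨v, (Ext.mk₀_bijective _ _).1 (by rwa [Ext.mk₀_comp_mk₀] at hy)⟩

theorem ext_one_subsingleton_of_extensions (hS : S.ShortExact)
    (h₂ : Subsingleton (Ext S.X₂ Y 1)) (h : ∀ u : S.X₁ ⟶ Y, ∃ v : S.X₂ ⟶ Y, S.f ≫ v = u) :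
    Subsingleton (Ext S.X₃ Y 1) := by
  refine ext_subsingleton_iff.2 fun x => ?_
  obtain ⟨y, rfl⟩ :=
    Ext.contravariant_sequence_exact₃ hS Y x (Subsingleton.elim _ _) (add_comm 1 0)
  obtain ⟨u, rfl⟩ := (Ext.mk₀_bijective _ _).2 y
  obtain ⟨v, rfl⟩ := h u
  rw [← Ext.mk₀_comp_mk₀]
  exact hS.extClass_comp_assoc _

theorem ext_subsingleton_of_retract_right (r : Retract Y Z) (h : Subsingleton (Ext X Z n)) :
    Subsingleton (Ext X Y n) := by
  refine ext_subsingleton_iff.2 fun x => ?_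
  rw [← Ext.comp_mk₀_id x, ← r.retract, ← Ext.mk₀_comp_mk₀,
    ← Ext.comp_assoc_of_third_deg_zero, Subsingleton.elim (x.comp (Ext.mk₀ r.i) (add_zero n)) 0,
    Ext.zero_comp]

theorem ext_subsingleton_of_retract_left (r : Retract X Z) (h : Subsingleton (Ext Z Y n)) :
    Subsingleton (Ext X Y n) := by
  refine ext_subsingleton_iff.2 fun x => ?_
  rw [← Ext.mk₀_id_comp x, ← r.retract, ← Ext.mk₀_comp_mk₀_assoc,
    Subsingleton.elim ((Ext.mk₀ r.r).comp x (zero_add n)) 0, Ext.comp_zero]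

theorem ext_subsingleton_of_isZero_left (h : IsZero X) : Subsingleton (Ext X Y n) := by
  rw [ext_subsingleton_iff]
  intro x
  rw [← Ext.mk₀_id_comp x, h.eq_of_src (𝟙 X) 0, Ext.mk₀_zero, Ext.zero_comp]

theorem ext_subsingleton_of_isZero_right (h : IsZero Y) : Subsingleton (Ext X Y n) := by
  rw [ext_subsingleton_iff]
  intro x
  rw [← Ext.comp_mk₀_id x, h.eq_of_src (𝟙 Y) 0, Ext.mk₀_zero, Ext.comp_zero]

end ExtVanishing

section Pullback

universe v u

variable {C : Type u} [Category.{v} C] [Abelian C]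

theorem shortExact_kernel {X Y : C} (f : X ⟶ Y) [Epi f] :
    (ShortComplex.mk (kernel.ι f) f (kernel.condition f)).ShortExact :=
  { exact := ShortComplex.exact_kernel f }

theorem shortExact_cokernel {X Y : C} (f : X ⟶ Y) [Mono f] :
    (ShortComplex.mk f (cokernel.π f) (cokernel.condition f)).ShortExact :=
  { exact := ShortComplex.exact_cokernel f }

/-- The pullback of a short complex `X₁ ⟶ X₂ ⟶ X₃` along a morphism `u : Y ⟶ X₃`, that is,
`X₁ ⟶ X₂ ×[X₃] Y ⟶ Y`. -/
noncomputable abbrev pullbackComplex (S : ShortComplex C) {Y : C} (u : Y ⟶ S.X₃) :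
    ShortComplex C :=
  ShortComplex.mk (pullback.lift (f := S.g) (g := u) S.f 0 (by simp)) (pullback.snd S.g u)
    (pullback.lift_snd _ _ _)

theorem pullbackComplex_shortExact {S : ShortComplex C} (hS : S.ShortExact) {Y : C}
    (u : Y ⟶ S.X₃) : (pullbackComplex S u).ShortExact := by
  have := hS.mono_f
  have := hS.epi_g
  have : Mono (pullbackComplex S u).f := mono_of_mono_fac (pullback.lift_fst _ _ _)
  refine { exact := ShortComplex.exact_of_f_is_kernel _ (KernelFork.IsLimit.ofι' _ _
    fun {A} k hk => ⟨hS.exact.lift (k ≫ pullback.fst S.g u) ?_, ?_⟩) }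
  · rw [Category.assoc, pullback.condition, ← Category.assoc, hk, zero_comp]
  · apply pullback.hom_ext
    · rw [Category.assoc, pullback.lift_fst, hS.exact.lift_f]
    · rw [Category.assoc, pullback.lift_snd, comp_zero, ← hk]

theorem shortExact_pullback_fst {S : ShortComplex C} (hS : S.ShortExact) {X : C}
    (g : X ⟶ S.X₂) [Epi g] :
    (ShortComplex.mk (pullback.fst g S.f) (g ≫ S.g)
      (by rw [← Category.assoc, pullback.condition, Category.assoc, S.zero,
        comp_zero])).ShortExact := by
  have := hS.mono_f
  have := hS.epi_g
  refine { exact := ShortComplex.exact_of_f_is_kernel _ (KernelFork.IsLimit.ofι' _ _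
    fun {A} k hk => ⟨pullback.lift k (hS.exact.lift (k ≫ g) ?_) ?_, ?_⟩), epi_g := epi_comp _ _ }
  · rwa [Category.assoc]
  · rw [hS.exact.lift_f]
  · exact pullback.lift_fst _ _ _

end Pullback

section Filtered

universe v u

variable {C : Type u} [Category.{v} C] [Abelian C] {P : ObjectProperty C} {X Y : C}

/-- `Filtered P X` says that `X` has a finite filtration whose sections lie in `P`; for the
property of being a (co)standard module this is membership in `F(Δ)`, respectively `F(∇)`. -/
inductive Filtered (P : ObjectProperty C) : C → Prop
  | zero {X : C} (hX : IsZero X) : Filtered P X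
  | step {S : ShortComplex C} (hS : S.ShortExact) (h₁ : Filtered P S.X₁) (h₃ : P S.X₃) :
      Filtered P S.X₂

namespace Filtered

theorem of_iso (hX : Filtered P X) (e : X ≅ Y) : Filtered P Y := by
  cases hX with
  | zero hX => exact .zero (hX.of_iso e.symm)
  | @step S hS h₁ h₃ =>
    have e' : S ≅ ShortComplex.mk (S.f ≫ e.hom) (e.inv ≫ S.g) (by simp) :=
      ShortComplex.isoMk (Iso.refl _) e (Iso.refl _)
    exact .step (ShortComplex.shortExact_of_iso e' hS) h₁ h₃

instance isClosedUnderIsomorphisms :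
    ObjectProperty.IsClosedUnderIsomorphisms (Filtered P) :=
  ⟨fun e h => h.of_iso e⟩

theorem of (hX : P X) : Filtered P X :=
  .step (shortExact_kernel (𝟙 X)) (.zero (isZero_kernel_of_mono _)) hX

theorem extension {S : ShortComplex C} (hS : S.ShortExact) (h₁ : Filtered P S.X₁)
    (h₃ : Filtered P S.X₃) : Filtered P S.X₂ := by
  obtain @⟨X₁, X₂, X₃, f, g, w⟩ := S
  change Filtered P X₃ at h₃
  change Filtered P X₂
  induction h₃ generalizing X₂ with
  | zero hX =>
    have := hS.isIso_f_iff.2 hX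
    exact h₁.of_iso (asIso f)
  | step hS' _ hD ih =>
    have := hS.epi_g
    exact .step (shortExact_pullback_fst hS' g) (ih _ _ _ (pullbackComplex_shortExact hS _) h₁) hD

universe w

variable [HasExt.{w} C] {n : ℕ}

theorem ext_subsingleton_left (h : ∀ D, P D → Subsingleton (Ext D Y n)) (hX : Filtered P X) :
    Subsingleton (Ext X Y n) := by
  induction hX with
  | zero hX => exact ext_subsingleton_of_isZero_left hX
  | step hS _ h₃ ih => exact ext_subsingleton_X₂_left hS ih (h _ h₃)

theorem ext_subsingleton_right (h : ∀ D, P D → Subsingleton (Ext X D n)) (hY : Filtered P Y) :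
    Subsingleton (Ext X Y n) := by
  induction hY with
  | zero hX => exact ext_subsingleton_of_isZero_right hX
  | step hS _ h₃ ih => exact ext_subsingleton_X₂_right hS ih (h _ h₃)

end Filtered

end Filtered

section Coresolution

universe w v u

variable {C : Type u} [Category.{v} C] [Abelian C] {P : ObjectProperty C}

/-- `HasCoresolution P X d` says that `X` has a coresolution `0 ⟶ X ⟶ M₀ ⟶ ⋯ ⟶ M_d ⟶ 0` by
objects with property `P`, built by splicing short exact sequences. -/
inductive HasCoresolution (P : ObjectProperty C) : C → ℕ → Prop
  | zero {X : C} (hX : P X) : HasCoresolution P X 0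
  | succ {S : ShortComplex C} {d : ℕ} (hS : S.ShortExact) (h₂ : P S.X₂)
      (h₃ : HasCoresolution P S.X₃ d) : HasCoresolution P S.X₁ (d + 1)

theorem HasCoresolution.of_iso [P.IsClosedUnderIsomorphisms] {X Y : C} {d : ℕ}
    (hX : HasCoresolution P X d) (e : X ≅ Y) : HasCoresolution P Y d := by
  cases hX with
  | zero hX => exact .zero (P.prop_of_iso e hX)
  | @succ S d hS h₂ h₃ =>
    have e' : S ≅ ShortComplex.mk (e.inv ≫ S.f) S.g (by simp) :=
      ShortComplex.isoMk e (Iso.refl _) (Iso.refl _)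
    exact .succ (ShortComplex.shortExact_of_iso e' hS) h₂ h₃

theorem hasCoresolution_iff_ext [HasExt.{w} C] {G : ObjectProperty C} {ι : Type*} {A : ι → C}
    (ext_eq_zero : ∀ i D n, P D → Subsingleton (Ext (A i) D (n + 1)))
    (of_ext_one : ∀ X, G X → (∀ i, Subsingleton (Ext (A i) X 1)) → P X)
    (embedding : ∀ X, G X → ∃ (J : C) (j : X ⟶ J), Mono j ∧ P J ∧ G (cokernel j))
    {X : C} (hX : G X) (d : ℕ) :
    HasCoresolution P X d ↔ ∀ i, Subsingleton (Ext (A i) X (d + 1)) := by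
  constructor
  · intro h i
    clear hX
    induction h with
    | zero hX => exact ext_eq_zero i _ 0 hX
    | succ hS h₂ _ ih => exact ext_subsingleton_X₁_right hS ih (ext_eq_zero i _ _ h₂)
  · intro h
    induction d generalizing X with
    | zero => exact .zero (of_ext_one X hX h)
    | succ d ih =>
      obtain ⟨J, j, _, hJ, hG⟩ := embedding X hX
      have hS := shortExact_cokernel j
      exact .succ hS hJ (ih hG fun i => ext_subsingleton_X₃_right hS (ext_eq_zero i J d hJ) (h i))

end Coresolution

section ExactSequences

variable {R : Type} [Ring R] {P : ObjectProperty (ModuleCat.{0} R)} {M : ModuleCat.{0} R} {d : ℕ}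

theorem hasCoresolution_of_isExactSeq [P.IsClosedUnderIsomorphisms]
    {N : Fin (d + 2) → ModuleCat.{0} R} {f : ∀ i : Fin (d + 1), ↥(N i.castSucc) →ₗ[R] ↥(N i.succ)}
    (hf : IsExactSeq R d N f) (hN : ∀ i : Fin (d + 1), P (N i.succ)) :
    HasCoresolution P (N 0) d := by
  obtain ⟨hinj, hsurj, hex⟩ := hf
  have range_cores (j : Fin (d + 1)) :
      HasCoresolution P (ModuleCat.of R (LinearMap.range (f j))) j.rev := by
    induction j using Fin.reverseInduction with
    | last =>
      rw [Fin.rev_last]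
      exact .zero (P.prop_of_iso (((LinearEquiv.ofEq _ _ (LinearMap.range_eq_top.2 hsurj)).trans
        Submodule.topEquiv).symm.toModuleIso) (hN (Fin.last d)))
    | cast i ih =>
      rw [Fin.rev_castSucc, Fin.val_succ]
      rw [Fin.rev_succ, Fin.val_castSucc] at ih
      have ker_eq : LinearMap.ker (f i.succ).rangeRestrict = LinearMap.range (f i.castSucc) := by
        rw [LinearMap.ker_rangeRestrict, hex i]
      have ker_cores := HasCoresolution.succ
        (LinearMap.shortExact_shortComplexKer (f i.succ).surjective_rangeRestrict)
        (hN i.castSucc) ih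
      exact ker_cores.of_iso (LinearEquiv.ofEq _ _ ker_eq).toModuleIso
  exact (range_cores 0).of_iso (LinearEquiv.ofInjective (f 0) hinj).symm.toModuleIso

theorem HasCoresolution.exists_isExactSeq (h : HasCoresolution P M d) :
    ∃ (N : Fin (d + 2) → ModuleCat.{0} R)
      (f : ∀ i : Fin (d + 1), ↥(N i.castSucc) →ₗ[R] ↥(N i.succ)),
      IsExactSeq R d N f ∧ N 0 = M ∧ ∀ i : Fin (d + 1), P (N i.succ) := by
  induction h with
  | @zero M hM =>
    exact ⟨fun _ => M, fun _ => LinearMap.id, ⟨Function.injective_id, Function.surjective_id,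
      fun i => i.elim0⟩, rfl, fun _ => hM⟩
  | @succ S d hS h₂ _ ih =>
    obtain ⟨N, f, ⟨hinj, hsurj, hex⟩, hN₀, hN⟩ := ih
    let e := (eqToIso hN₀).toLinearEquiv
    have hg : Function.Surjective (e.symm.toLinearMap ∘ₗ S.g.hom) :=
      e.symm.surjective.comp hS.moduleCat_surjective_g
    let N' : Fin (d + 3) → ModuleCat.{0} R := Fin.cons S.X₁ (Fin.cons S.X₂ (fun i => N i.succ))
    let f' : ∀ i : Fin (d + 2), ↥(N' i.castSucc) →ₗ[R] ↥(N' i.succ) :=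
      Fin.cases S.f.hom (Fin.cases (f 0 ∘ₗ e.symm.toLinearMap ∘ₗ S.g.hom) (fun i => f i.succ))
    refine ⟨N', f', ⟨hS.moduleCat_injective_f, ?_, ?_⟩, rfl, Fin.cases h₂ hN⟩
    · cases d with
      | zero => exact hsurj.comp hg
      | succ d => exact hsurj
    · refine Fin.cases ?_ fun i => ?_
      · change LinearMap.range S.f.hom = LinearMap.ker (f 0 ∘ₗ e.symm.toLinearMap ∘ₗ S.g.hom)
        rw [hS.exact.moduleCat_range_eq_ker, LinearMap.ker_comp_of_ker_eq_bot _
          (LinearMap.ker_eq_bot.2 hinj)]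
        exact (LinearMap.ker_comp_of_ker_eq_bot _ (LinearEquiv.ker e.symm)).symm
      · revert i
        cases d with
        | zero => exact fun i => i.elim0
        | succ d =>
          refine Fin.cases ?_ fun i => hex i.succ
          change LinearMap.range (f 0 ∘ₗ e.symm.toLinearMap ∘ₗ S.g.hom) = LinearMap.ker (f 1)
          exact (LinearMap.range_comp_of_range_eq_top _ (LinearMap.range_eq_top.2 hg)).trans
            (hex 0)

theorem exists_isExactSeq_iff_hasCoresolution [P.IsClosedUnderIsomorphisms] :
    (∃ (N : Fin (d + 2) → ModuleCat.{0} R)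
      (f : ∀ i : Fin (d + 1), ↥(N i.castSucc) →ₗ[R] ↥(N i.succ)),
      IsExactSeq R d N f ∧ N 0 = M ∧ ∀ i : Fin (d + 1), P (N i.succ)) ↔ HasCoresolution P M d := by
  refine ⟨?_, HasCoresolution.exists_isExactSeq⟩
  rintro ⟨N, f, hf, rfl, hN⟩
  exact hasCoresolution_of_isExactSeq hf hN

end ExactSequences

section ModuleFiltrations

variable {R : Type} [Ring R] {M : ModuleCat.{0} R}

theorem exists_section_map {A B : Submodule R ↥M} {D : ModuleCat.{0} R}
    (e : subquot R A B ≃ₗ[R] ↥D) :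
    ∃ q : ↥B →ₗ[R] ↥D, Function.Surjective q ∧ LinearMap.ker q = A.comap B.subtype :=
  ⟨e.toLinearMap ∘ₗ (A.comap B.subtype).mkQ, e.surjective.comp (Submodule.mkQ_surjective _),
    by rw [LinearEquiv.ker_comp, Submodule.ker_mkQ]⟩

theorem exists_epi_of_section_top {A B : Submodule R ↥M} (hB : B = ⊤) {D : ModuleCat.{0} R}
    (e : subquot R A B ≃ₗ[R] ↥D) : ∃ p : M ⟶ D, Epi p ∧ LinearMap.ker p.hom = A := by
  subst hB
  obtain ⟨q, hq, hker⟩ := exists_section_map e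
  refine ⟨ModuleCat.ofHom (q ∘ₗ Submodule.topEquiv.symm.toLinearMap),
    (ModuleCat.epi_iff_surjective _).2 (hq.comp Submodule.topEquiv.symm.surjective), ?_⟩
  rw [ModuleCat.hom_ofHom, LinearMap.ker_comp, hker]
  rfl

variable {n : ℕ} {f : Fin (n + 1) → Submodule R ↥M} {D : Fin n → ModuleCat.{0} R}
  {P : ObjectProperty (ModuleCat.{0} R)}

theorem HasFiltrationWithSections.filtered (hf : HasFiltrationWithSections R M n f D)
    (j : Fin (n + 1)) (hP : ∀ i : Fin n, i.castSucc < j → P (D i)) :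
    Filtered P (ModuleCat.of R ↥(f j)) := by
  obtain ⟨hmono, hbot, -, hsec⟩ := hf
  induction j using Fin.induction with
  | zero =>
    rw [hbot]
    exact .zero (ModuleCat.isZero_of_subsingleton _)
  | succ j ih =>
    obtain ⟨e⟩ := hsec j
    obtain ⟨q, hq, hker⟩ := exists_section_map e
    have e' := (Submodule.comapSubtypeEquivOfLe (hmono (Fin.castSucc_le_succ j))).symm.trans
      (LinearEquiv.ofEq _ _ hker.symm)
    exact .step (LinearMap.shortExact_shortComplexKer hq)
      ((ih fun i hi => hP i (hi.trans Fin.castSucc_lt_succ)).of_iso e'.toModuleIso)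
      (hP j Fin.castSucc_lt_succ)

theorem HasFiltrationWithSections.filtered_top (hf : HasFiltrationWithSections R M n f D)
    (hP : ∀ i, P (D i)) : Filtered P M :=
  (hf.filtered (Fin.last n) fun i _ => hP i).of_iso
    ((LinearEquiv.ofEq _ _ hf.2.2.1).trans Submodule.topEquiv).toModuleIso

theorem HasFiltrationWithSections.snoc {S : ShortComplex (ModuleCat.{0} R)} (hS : S.ShortExact)
    {f : Fin (n + 1) → Submodule R ↥S.X₁} (hf : HasFiltrationWithSections R S.X₁ n f D) :
    HasFiltrationWithSections R S.X₂ (n + 1)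
      (Fin.snoc (α := fun _ => Submodule R ↥S.X₂) (fun i => (f i).map S.f.hom) ⊤)
      (Fin.snoc (α := fun _ => ModuleCat.{0} R) D S.X₃) := by
  obtain ⟨hmono, hbot, htop, hsec⟩ := hf
  have hinj : Function.Injective S.f.hom := hS.moduleCat_injective_f
  refine ⟨?_, ?_, by rw [Fin.snoc_last], fun i => ?_⟩
  · refine Fin.monotone_iff_le_succ.2 fun i => ?_
    induction i using Fin.lastCases with
    | last => rw [Fin.succ_last, Fin.snoc_last]; exact le_top
    | cast i =>
      rw [Fin.succ_castSucc, Fin.snoc_castSucc, Fin.snoc_castSucc]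
      exact Submodule.map_mono (hmono (Fin.castSucc_le_succ i))
  · rw [← Fin.castSucc_zero, Fin.snoc_castSucc, hbot, Submodule.map_bot]
  · induction i using Fin.lastCases with
    | last =>
      rw [Fin.snoc_castSucc, Fin.succ_last, Fin.snoc_last, Fin.snoc_last, htop, Submodule.map_top,
        hS.exact.moduleCat_range_eq_ker]
      have hq : Function.Surjective (S.g.hom ∘ₗ (⊤ : Submodule R ↥S.X₂).subtype) :=
        hS.moduleCat_surjective_g.comp Submodule.topEquiv.surjective
      exact ⟨(Submodule.quotEquivOfEq _ _ (LinearMap.ker_comp _ _).symm).trans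
        (LinearMap.quotKerEquivOfSurjective _ hq)⟩
    | cast i =>
      obtain ⟨e⟩ := hsec i
      rw [Fin.snoc_castSucc, Fin.succ_castSucc, Fin.snoc_castSucc, Fin.snoc_castSucc]
      refine ⟨(Submodule.Quotient.equiv _ _
        (Submodule.equivMapOfInjective S.f.hom hinj (f i.succ)) ?_).symm.trans e⟩
      ext x
      simp only [Submodule.mem_map, Submodule.mem_comap]
      constructor
      · rintro ⟨y, hy, rfl⟩
        exact ⟨y, hy, rfl⟩
      · rintro ⟨y, hy, hxy⟩
        exact ⟨⟨y, hmono (Fin.castSucc_le_succ i) hy⟩, hy, Subtype.ext hxy⟩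

theorem exists_hasFiltrationWithSections_iff {Λ : Type} {D : Λ → ModuleCat.{0} R} :
    (∃ (n : ℕ) (f : Fin (n + 1) → Submodule R ↥M) (g : Fin n → Λ),
      HasFiltrationWithSections R M n f (fun i => D (g i))) ↔
      Filtered (ObjectProperty.ofObj D) M := by
  constructor
  · rintro ⟨n, f, g, hf⟩
    exact hf.filtered_top fun i => ObjectProperty.ofObj_apply D (g i)
  · intro hM
    induction hM with
    | @zero M hM =>
      have := ModuleCat.subsingleton_of_isZero hM
      exact ⟨0, fun _ => ⊥, Fin.elim0, monotone_const, rfl, Subsingleton.elim _ _,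
        fun i => i.elim0⟩
    | @step S hS _ h₃ ih =>
      obtain ⟨n, f, g, hf⟩ := ih
      obtain ⟨l, hl⟩ := (ObjectProperty.ofObj_iff _ _).1 h₃
      have hD : (fun i => D (Fin.snoc (α := fun _ => Λ) g l i)) =
          Fin.snoc (α := fun _ => ModuleCat.{0} R) (fun i => D (g i)) S.X₃ := by
        refine funext fun i => ?_
        induction i using Fin.lastCases with
        | last => rw [Fin.snoc_last, Fin.snoc_last, hl]
        | cast i => rw [Fin.snoc_castSucc, Fin.snoc_castSucc]
      exact ⟨n + 1, _, Fin.snoc (α := fun _ => Λ) g l, hD ▸ hf.snoc hS⟩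

variable {Λ : Type} [Fintype Λ] [PartialOrder Λ] {Q : QHData R Λ}

theorem inCostdFilt_iff_filtered : InCostdFilt R Q M ↔ Filtered (.ofObj Q.costd) M :=
  exists_hasFiltrationWithSections_iff

theorem inStdFilt_iff_filtered : InStdFilt R Q M ↔ Filtered (.ofObj Q.std) M :=
  exists_hasFiltrationWithSections_iff

end ModuleFiltrations

section Weights

variable {R : Type} [Ring R] {Λ : Type} [Fintype Λ] [PartialOrder Λ] {Q : QHData R Λ} {μ l : Λ}
  {M N : ModuleCat.{0} R}

instance projective_P : Projective (Q.P μ) :=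
  (IsProjective.iff_projective _).1 (Q.projCover μ).1

instance injective_I : Injective (Q.I μ) :=
  (Module.injective_iff_injective_object R _).1 (Q.injHull μ).1

instance simple_L : Simple (Q.L μ) :=
  have := Q.simpleL μ
  (simple_iff_isSimpleModule' _).2 this

/-- `μ` is a weight of `M` if the simple module `L μ` is a composition factor of `M`. This is
encoded by a nonzero morphism from the projective cover of `L μ`, which makes the behaviour of
weights in short exact sequences immediate; see `isWeight_iff_isCompFactor`. -/
def IsWeight (Q : QHData R Λ) (μ : Λ) (M : ModuleCat.{0} R) : Prop := ∃ h : Q.P μ ⟶ M, h ≠ 0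

theorem IsWeight.of_mono (h : IsWeight Q μ M) (f : M ⟶ N) [Mono f] : IsWeight Q μ N := by
  obtain ⟨u, hu⟩ := h
  exact ⟨u ≫ f, fun h => hu (zero_of_comp_mono f h)⟩

theorem IsWeight.of_epi (h : IsWeight Q μ N) (f : M ⟶ N) [Epi f] : IsWeight Q μ M := by
  obtain ⟨u, hu⟩ := h
  refine ⟨Projective.factorThru u f, fun h => hu ?_⟩
  rw [← Projective.factorThru_comp u f, h, zero_comp]

theorem IsWeight.of_shortExact {S : ShortComplex (ModuleCat.{0} R)} (hS : S.ShortExact)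
    (h : IsWeight Q μ S.X₂) : IsWeight Q μ S.X₁ ∨ IsWeight Q μ S.X₃ := by
  obtain ⟨u, hu⟩ := h
  have := hS.mono_f
  by_cases hg : u ≫ S.g = 0
  · refine .inl ⟨hS.exact.lift u hg, fun h => hu ?_⟩
    rw [← hS.exact.lift_f u hg, h, zero_comp]
  · exact .inr ⟨_, hg⟩

theorem exists_projCover_map (Q : QHData R Λ) (μ : Λ) :
    ∃ π : Q.P μ ⟶ Q.L μ, Epi π ∧
      ∀ {M : ModuleCat.{0} R} (p : Q.P μ ⟶ M) [Epi p], p ≠ 0 → ∃ v : M ⟶ Q.L μ, p ≫ v = π := by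
  obtain ⟨-, π, hπ, hsup⟩ := Q.projCover μ
  have := Q.simpleL μ
  have hmax : IsCoatom (LinearMap.ker π) :=
    isSimpleModule_iff_isCoatom.1 (IsSimpleModule.congr (π.quotKerEquivOfSurjective hπ))
  refine ⟨ModuleCat.ofHom π, (ModuleCat.epi_iff_surjective _).2 hπ, fun {M} p _ hp => ?_⟩
  have hle : LinearMap.ker p.hom ≤ LinearMap.ker π := by
    by_contra hle
    have htop : LinearMap.ker p.hom ⊔ LinearMap.ker π = ⊤ := hmax.2 _ (right_lt_sup.2 hle)
    exact hp (ModuleCat.hom_ext (LinearMap.ker_eq_top.1 (hsup _ htop)))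
  have hS := LinearMap.shortExact_shortComplexKer ((ModuleCat.epi_iff_surjective p).1 ‹_›)
  refine ⟨hS.exact.desc (ModuleCat.ofHom π) ?_, hS.exact.g_desc _ _⟩
  ext x
  exact hle x.2

theorem isWeight_L (Q : QHData R Λ) (μ : Λ) : IsWeight Q μ (Q.L μ) := by
  obtain ⟨π, _, -⟩ := exists_projCover_map Q μ
  refine ⟨π, fun h => ?_⟩
  have : Epi (0 : Q.P μ ⟶ Q.L μ) := h ▸ ‹Epi π›
  exact Simple.not_isZero (Q.L μ) (IsZero.of_epi_eq_zero _ h)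

theorem isWeight_iff_isCompFactor : IsWeight Q μ M ↔ IsCompFactor R (Q.L μ) M := by
  constructor
  · rintro ⟨h, hh⟩
    obtain ⟨π, hπ, hfac⟩ := exists_projCover_map Q μ
    have : Epi (ModuleCat.ofHom h.hom.rangeRestrict) :=
      (ModuleCat.epi_iff_surjective _).2 h.hom.surjective_rangeRestrict
    obtain ⟨v, hv⟩ := hfac (ModuleCat.ofHom h.hom.rangeRestrict) fun h₀ => hh <| by
      ext x
      exact congrArg Subtype.val (LinearMap.congr_fun (congrArg ModuleCat.Hom.hom h₀) x)
    have hsurj : Function.Surjective v.hom :=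
      (ModuleCat.epi_iff_surjective v).1 (epi_of_epi_fac hv)
    refine ⟨(LinearMap.ker v.hom).map (LinearMap.range h.hom).subtype, LinearMap.range h.hom,
      Submodule.map_subtype_le _ _, ⟨(Submodule.quotEquivOfEq _ _ ?_).trans
        (v.hom.quotKerEquivOfSurjective hsurj)⟩⟩
    exact Submodule.comap_map_eq_of_injective (Submodule.subtype_injective _) _
  · rintro ⟨A, B, -, ⟨e⟩⟩
    obtain ⟨q, hq, -⟩ := exists_section_map e
    have : Epi (ModuleCat.ofHom q) := (ModuleCat.epi_iff_surjective _).2 hq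
    have : Mono (ModuleCat.ofHom B.subtype) :=
      (ModuleCat.mono_iff_injective _).2 B.injective_subtype
    exact ((isWeight_L Q μ).of_epi (ModuleCat.ofHom q)).of_mono (ModuleCat.ofHom B.subtype)

theorem IsWeight.nonempty_iso_L [Simple M] (h : IsWeight Q μ M) : Nonempty (M ≅ Q.L μ) := by
  obtain ⟨u, hu⟩ := h
  obtain ⟨π, _, hfac⟩ := exists_projCover_map Q μ
  have : Epi u := epi_of_nonzero_to_simple hu
  obtain ⟨v, rfl⟩ := hfac u hu
  have hv : v ≠ 0 := fun hv =>
    Simple.not_isZero (Q.L μ) (IsZero.of_epi_eq_zero (u ≫ v) (by rw [hv, comp_zero]))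
  have := isIso_of_hom_simple hv
  exact ⟨asIso v⟩

theorem IsWeight.eq_of_L (h : IsWeight Q μ (Q.L l)) : μ = l := by
  obtain ⟨e⟩ := h.nonempty_iso_L
  by_contra hne
  exact (Q.nonisoL μ l hne).elim e.symm.toLinearEquiv

end Weights

section Standard

variable {R : Type} [Ring R] {Λ : Type} [Fintype Λ] [PartialOrder Λ] {Q : QHData R Λ} {μ l : Λ}
  {M : ModuleCat.{0} R}

theorem IsWeight.le_of_std (h : IsWeight Q μ (Q.std l)) : μ ≤ l := by
  obtain ⟨K, ⟨e⟩, hK, -⟩ := Q.stdSpec l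
  exact hK μ (isWeight_iff_isCompFactor.1 (h.of_mono e.toModuleIso.hom))

theorem exists_le_succ_not_le_castSucc {α : Type*} [LE α] {n : ℕ} {f : Fin (n + 1) → α} {a : α}
    (hzero : ¬ a ≤ f 0) (hlast : a ≤ f (Fin.last n)) :
    ∃ i : Fin n, a ≤ f i.succ ∧ ¬ a ≤ f i.castSucc := by
  by_contra! hstep
  have hnot (j : Fin (n + 1)) : ¬ a ≤ f j := by
    induction j using Fin.induction with
    | zero => exact hzero
    | succ j ih => exact fun hj => ih (hstep j hj)
  exact hnot _ hlast

theorem nonempty_section_equiv_L {A B : Submodule R ↥M} (hs : IsSimpleModule R (subquot R A B))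
    (h : Q.P l ⟶ M) (hB : LinearMap.range h.hom ≤ B) (hA : ¬ LinearMap.range h.hom ≤ A) :
    Nonempty (subquot R A B ≃ₗ[R] ↥(Q.L l)) := by
  let u : ↥(Q.P l) →ₗ[R] subquot R A B :=
    (A.comap B.subtype).mkQ ∘ₗ h.hom.codRestrict B fun x => hB ⟨x, rfl⟩
  have hu : u ≠ 0 := by
    refine fun hu => hA ?_
    rintro _ ⟨x, rfl⟩
    exact (Submodule.Quotient.mk_eq_zero (A.comap B.subtype)).1 (LinearMap.congr_fun hu x)
  have hw : IsWeight Q l (ModuleCat.of R (subquot R A B)) :=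
    ⟨ModuleCat.ofHom u, fun h₀ => hu (congrArg ModuleCat.Hom.hom h₀)⟩
  obtain ⟨e⟩ := hw.nonempty_iso_L
  exact ⟨e.toLinearEquiv⟩

theorem exists_unique_section (hM : CompFactorMult R (Q.L l) M 1) :
    ∃ A B : Submodule R ↥M, A ≤ B ∧ Nonempty (subquot R A B ≃ₗ[R] ↥(Q.L l)) ∧
      ∀ h : Q.P l ⟶ M, h ≠ 0 → LinearMap.range h.hom ≤ B ∧ ¬ LinearMap.range h.hom ≤ A := by
  obtain ⟨n, f, hmono, hbot, htop, hs, hcard⟩ := hM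
  obtain ⟨⟨i, hi⟩, huniq⟩ := Nat.card_eq_one_iff_exists.1 hcard
  refine ⟨f i.castSucc, f i.succ, hmono (Fin.castSucc_le_succ i), hi, fun h hh => ?_⟩
  obtain ⟨j, hj, hj'⟩ := exists_le_succ_not_le_castSucc (f := f) (a := LinearMap.range h.hom)
    (by rwa [hbot, le_bot_iff, LinearMap.range_eq_bot, ← ModuleCat.hom_zero,
      ModuleCat.hom_ext_iff.symm.not]) (htop ▸ le_top)
  obtain rfl : j = i :=
    congrArg Subtype.val (huniq ⟨j, nonempty_section_equiv_L (hs j) h hj hj'⟩)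
  exact ⟨hj, hj'⟩

theorem exists_P_to_std (Q : QHData R Λ) (l : Λ) : ∃ p : Q.P l ⟶ Q.std l, Epi p := by
  obtain ⟨K, ⟨e⟩, -, -⟩ := Q.stdSpec l
  exact ⟨ModuleCat.ofHom (e.symm.toLinearMap ∘ₗ K.mkQ),
    (ModuleCat.epi_iff_surjective _).2 (e.symm.surjective.comp K.mkQ_surjective)⟩

theorem exists_std_to_L (Q : QHData R Λ) (l : Λ) :
    ∃ q : Q.std l ⟶ Q.L l, Epi q ∧ ∀ μ, IsWeight Q μ (kernel q) → μ < l := by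
  obtain ⟨A, B, hle, ⟨e⟩, hAB⟩ := exists_unique_section (Q.multOne l)
  obtain ⟨p, hp⟩ := exists_P_to_std Q l
  have hp₀ : p ≠ 0 := by
    obtain ⟨h, hh⟩ := isWeight_iff_isCompFactor.2 ⟨A, B, hle, ⟨e⟩⟩
    exact fun h₀ => hh ((IsZero.of_epi_eq_zero p h₀).eq_zero_of_tgt h)
  obtain rfl : B = ⊤ := by
    rw [eq_top_iff, ← LinearMap.range_eq_top.2 ((ModuleCat.epi_iff_surjective p).1 hp)]
    exact (hAB p hp₀).1
  obtain ⟨q, hq, rfl⟩ := exists_epi_of_section_top rfl e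
  refine ⟨q, hq, fun μ hμ => (hμ.of_mono (kernel.ι q)).le_of_std.lt_of_ne ?_⟩
  rintro rfl
  obtain ⟨h, hh⟩ := hμ
  refine (hAB (h ≫ kernel.ι q) fun h₀ => hh (zero_of_comp_mono _ h₀)).2 ?_
  rintro _ ⟨x, rfl⟩
  exact LinearMap.congr_fun (congrArg ModuleCat.Hom.hom (kernel.condition q)) (h.hom x)

theorem eq_of_epi_P_to_std {m : Λ} (p : Q.P l ⟶ Q.std m) [Epi p] : m = l := by
  obtain ⟨q, _, -⟩ := exists_std_to_L Q m
  have hL : IsWeight Q l (Q.L m) :=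
    ⟨p ≫ q, fun h₀ => Simple.not_isZero (Q.L m) (IsZero.of_epi_eq_zero _ h₀)⟩
  exact hL.eq_of_L.symm

theorem exists_P_to_std_kernel_filtered (Q : QHData R Λ) (l : Λ) :
    ∃ p : Q.P l ⟶ Q.std l, Epi p ∧
      Filtered (.ofObj fun ν : Set.Ioi l => Q.std ν) (kernel p) := by
  obtain ⟨n, f, g, hF, hle, hcard⟩ := Q.projFilt l
  obtain ⟨⟨i, hi⟩, huniq⟩ := Nat.card_eq_one_iff_exists.1 hcard
  obtain ⟨m, rfl⟩ : ∃ m, n = m + 1 := Nat.exists_eq_succ_of_ne_zero i.pos.ne'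
  obtain ⟨e⟩ := hF.2.2.2 (Fin.last m)
  obtain ⟨p, hp, hker⟩ := exists_epi_of_section_top hF.2.2.1 e
  have hg : g (Fin.last m) = l := eq_of_epi_P_to_std p
  have hfilt := hF.filtered (P := .ofObj fun ν : Set.Ioi l => Q.std ν) (Fin.last m).castSucc
    fun j hj => ObjectProperty.ofObj_apply _ (⟨g j, (hle j).lt_of_ne fun hj' => hj.ne <|
      congrArg (fun x => x.1.castSucc)
        ((huniq ⟨j, hj'.symm⟩).trans (huniq ⟨Fin.last m, hg⟩).symm)⟩ : Set.Ioi l)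
  rw [← hker] at hfilt
  suffices ∃ p : Q.P l ⟶ Q.std (g (Fin.last m)), Epi p ∧
      Filtered (.ofObj fun ν : Set.Ioi l => Q.std ν) (kernel p) by rwa [hg] at this
  exact ⟨p, hp, hfilt.of_iso (ModuleCat.kernelIsoKer p).symm⟩

end Standard

section EssentialMono

universe v u

variable {C : Type u} [Category.{v} C] {X Y Z : C}

/-- A monomorphism `ι : X ⟶ Y` is essential if a morphism out of `Y` is a monomorphism as soon as
its restriction to `X` is one. -/
structure IsEssentialMono (ι : X ⟶ Y) : Prop where
  mono : Mono ι
  mono_of_comp : ∀ {M : C} (u : Y ⟶ M), Mono (ι ≫ u) → Mono u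

theorem IsEssentialMono.of_comp [Abelian C] {ι : X ⟶ Y} {j : Y ⟶ Z} [Mono j]
    (h : IsEssentialMono (ι ≫ j)) : IsEssentialMono ι := by
  have := h.mono
  refine ⟨mono_of_mono ι j, fun u _ => ?_⟩
  have hpush : (ι ≫ j) ≫ pushout.inl j u = (ι ≫ u) ≫ pushout.inr j u := by
    rw [Category.assoc, pushout.condition, Category.assoc]
  have : Mono (pushout.inl j u) := h.mono_of_comp _ (hpush ▸ mono_comp _ _)
  have : Mono (u ≫ pushout.inr j u) := pushout.condition (f := j) (g := u) ▸ mono_comp _ _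
  exact mono_of_mono u (pushout.inr j u)

end EssentialMono

section Costandard

variable {R : Type} [Ring R] {Λ : Type} [Fintype Λ] [PartialOrder Λ] {Q : QHData R Λ} {μ l : Λ}
  {A B : ModuleCat.{0} R}

theorem exists_isEssentialMono_I (Q : QHData R Λ) (l : Λ) :
    ∃ a : Q.L l ⟶ Q.I l, IsEssentialMono a := by
  obtain ⟨-, a, ha, hess⟩ := Q.injHull l
  refine ⟨ModuleCat.ofHom a, (ModuleCat.mono_iff_injective _).2 ha, fun {M} u hu => ?_⟩
  rw [ModuleCat.mono_iff_injective, ← LinearMap.ker_eq_bot]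
  refine hess _ (eq_bot_iff.2 ?_)
  rintro _ ⟨hx, y, rfl⟩
  obtain rfl : y = 0 := (ModuleCat.mono_iff_injective _).1 hu (hx.trans (map_zero _).symm)
  exact map_zero a

theorem exists_costd_to_I (Q : QHData R Λ) (l : Λ) : ∃ j : Q.costd l ⟶ Q.I l, Mono j ∧
    ∀ {A : ModuleCat.{0} R} (u : A ⟶ Q.I l), (∀ μ, IsWeight Q μ A → μ ≤ l) →
      ∃ v : A ⟶ Q.costd l, v ≫ j = u := by
  obtain ⟨V, ⟨e⟩, -, hmax⟩ := Q.costdSpec l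
  refine ⟨ModuleCat.ofHom (V.subtype ∘ₗ e.toLinearMap),
    (ModuleCat.mono_iff_injective _).2 (V.injective_subtype.comp e.injective),
    fun {A} u hA => ?_⟩
  have hle : LinearMap.range u.hom ≤ V := hmax _ fun μ hμ => hA μ <| by
    have : Epi (ModuleCat.ofHom u.hom.rangeRestrict) :=
      (ModuleCat.epi_iff_surjective _).2 u.hom.surjective_rangeRestrict
    exact (isWeight_iff_isCompFactor.2 hμ).of_epi (ModuleCat.ofHom u.hom.rangeRestrict)
  refine ⟨ModuleCat.ofHom (e.symm.toLinearMap ∘ₗ u.hom.codRestrict V fun x => hle ⟨x, rfl⟩), ?_⟩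
  ext x
  exact congrArg Subtype.val (e.apply_symm_apply _)

theorem IsWeight.le_of_costd (h : IsWeight Q μ (Q.costd l)) : μ ≤ l := by
  obtain ⟨V, ⟨e⟩, hV, -⟩ := Q.costdSpec l
  exact hV μ (isWeight_iff_isCompFactor.1 (h.of_mono e.toModuleIso.hom))

theorem exists_isEssentialMono_costd (Q : QHData R Λ) (l : Λ) :
    ∃ ι : Q.L l ⟶ Q.costd l, IsEssentialMono ι := by
  obtain ⟨a, ha⟩ := exists_isEssentialMono_I Q l
  obtain ⟨j, hj, hfac⟩ := exists_costd_to_I Q l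
  obtain ⟨ι, rfl⟩ := hfac a fun μ hμ => hμ.eq_of_L.le
  exact ⟨ι, ha.of_comp⟩

theorem ext_one_costd_subsingleton (hA : ∀ μ, IsWeight Q μ A → μ ≤ l) :
    Subsingleton (Ext A (Q.costd l) 1) := by
  obtain ⟨j, _, hfac⟩ := exists_costd_to_I Q l
  refine ext_subsingleton_X₁_right (shortExact_cokernel j)
    (ext_zero_subsingleton_iff.2 fun u => ?_) (Ext.subsingleton_of_injective A (Q.I l) 0)
  -- The pullback of `u` still has weights `≤ l`, so it cannot reach outside `costd l`.
  obtain ⟨v, hv⟩ := hfac (pullback.fst (cokernel.π j) u) fun μ hμ =>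
    (hμ.of_shortExact (pullbackComplex_shortExact (shortExact_cokernel j) u)).elim
      IsWeight.le_of_costd (hA μ)
  rw [← cancel_epi (pullback.snd (cokernel.π j) u), ← pullback.condition, ← hv, Category.assoc,
    cokernel.condition, comp_zero, comp_zero]

theorem hom_eq_zero_of_std (hB : ¬ IsWeight Q l B) (u : Q.std l ⟶ B) : u = 0 := by
  obtain ⟨p, _⟩ := exists_P_to_std Q l
  by_contra hu
  exact hB ⟨p ≫ u, fun h => hu (zero_of_epi_comp p h)⟩

theorem ext_std_costd_subsingleton (n : ℕ) (l m : Λ) :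
    Subsingleton (Ext (Q.std l) (Q.costd m) (n + 1)) := by
  induction n generalizing l with
  | zero =>
    by_cases hlm : l < m
    · exact ext_one_costd_subsingleton fun μ hμ => hμ.le_of_std.trans hlm.le
    obtain ⟨p, _, hK⟩ := exists_P_to_std_kernel_filtered Q l
    refine ext_subsingleton_X₃_left (shortExact_kernel p) (hK.ext_subsingleton_left ?_)
      (Ext.subsingleton_of_projective _ _ 0)
    rintro _ ⟨ν, hν⟩
    refine ext_zero_subsingleton_iff.2 (hom_eq_zero_of_std fun h => hlm ?_)
    exact lt_of_lt_of_le hν h.le_of_costd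
  | succ n ih =>
    obtain ⟨p, _, hK⟩ := exists_P_to_std_kernel_filtered Q l
    refine ext_subsingleton_X₃_left (shortExact_kernel p) (hK.ext_subsingleton_left ?_)
      (Ext.subsingleton_of_projective _ _ (n + 1))
    rintro _ ⟨ν⟩
    exact ih ν

theorem ext_filtered_subsingleton (hA : Filtered (.ofObj Q.std) A)
    (hB : Filtered (.ofObj Q.costd) B) (n : ℕ) : Subsingleton (Ext A B (n + 1)) := by
  refine hA.ext_subsingleton_left ?_
  rintro _ ⟨l⟩
  refine hB.ext_subsingleton_right ?_
  rintro _ ⟨m⟩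
  exact ext_std_costd_subsingleton n l m

end Costandard

section FiniteModules

variable {R : Type} [Ring R] {Λ : Type} [Fintype Λ] [PartialOrder Λ] {Q : QHData R Λ} {l : Λ}
  {M N : ModuleCat.{0} R} {n : ℕ}

theorem ext_subsingleton_of_isFiniteLength {W : Type} [AddCommGroup W] [Module R W]
    (hW : IsFiniteLength R W)
    (h : ∀ μ, IsWeight Q μ (ModuleCat.of R W) → Subsingleton (Ext (Q.L μ) M n)) :
    Subsingleton (Ext (ModuleCat.of R W) M n) := by
  induction hW with
  | of_subsingleton =>
    exact ext_subsingleton_of_isZero_left (ModuleCat.isZero_of_subsingleton _)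
  | @of_simple_quotient W _ _ A hsimple _ ih =>
    have hS := LinearMap.shortExact_shortComplexKer A.mkQ_surjective
    have := hS.epi_g
    have : Mono (ModuleCat.ofHom A.subtype) :=
      (ModuleCat.mono_iff_injective _).2 A.injective_subtype
    obtain ⟨ν, ⟨e⟩⟩ := Q.fullL (ModuleCat.of R (W ⧸ A)) hsimple
    refine ext_subsingleton_X₂_left hS ?_ ?_
    · exact ext_subsingleton_of_retract_left
        (.ofIso (LinearEquiv.ofEq _ _ A.ker_mkQ).toModuleIso)
        (ih fun μ hμ => h μ (hμ.of_mono (ModuleCat.ofHom A.subtype)))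
    · refine ext_subsingleton_of_retract_left (.ofIso e.toModuleIso) (h ν ?_)
      exact ((isWeight_L Q ν).of_mono e.symm.toModuleIso.hom).of_epi (ModuleCat.ofHom A.mkQ)

/-- The finitely generated `R`-modules have enough injectives; over a finite-dimensional algebra
`R` they are coextended from the ground field. -/
class EnoughFGInjectives (R : Type) [Ring R] : Prop where
  exists_mono (M : ModuleCat.{0} R) [Module.Finite R M] :
    ∃ (J : ModuleCat.{0} R) (j : M ⟶ J), Mono j ∧ Injective J ∧ Module.Finite R J

theorem finite_of_mono [IsNoetherianRing R] (f : M ⟶ N) [Mono f] [Module.Finite R N] :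
    Module.Finite R M :=
  Module.Finite.of_injective f.hom ((ModuleCat.mono_iff_injective f).1 ‹_›)

theorem finite_of_epi (f : M ⟶ N) [Epi f] [Module.Finite R M] : Module.Finite R N :=
  Module.Finite.of_surjective f.hom ((ModuleCat.epi_iff_surjective f).1 ‹_›)

theorem finite_costd [IsNoetherianRing R] [EnoughFGInjectives R] (Q : QHData R Λ) (l : Λ) :
    Module.Finite R (Q.costd l) := by
  obtain ⟨a, ha⟩ := exists_isEssentialMono_I Q l
  have := ha.mono
  have := Q.finiteL l
  obtain ⟨J, i, hi, hJ, _⟩ := EnoughFGInjectives.exists_mono (Q.L l)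
  have : Mono (Injective.factorThru i a) :=
    ha.mono_of_comp _ (by rwa [Injective.comp_factorThru])
  obtain ⟨j, _, -⟩ := exists_costd_to_I Q l
  exact finite_of_mono (j ≫ Injective.factorThru i a)

variable [IsArtinianRing R]

theorem isFiniteLength_of_finite [Module.Finite R M] : IsFiniteLength R M :=
  isFiniteLength_iff_isNoetherian_isArtinian.2 ⟨inferInstance, inferInstance⟩

theorem exists_mono_L (Q : QHData R Λ) [Module.Finite R M] (hM : ¬ IsZero M) :
    ∃ (l : Λ) (a : Q.L l ⟶ M), Mono a := by
  have : Nontrivial M := not_subsingleton_iff_nontrivial.1 fun h =>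
    hM (ModuleCat.isZero_of_subsingleton M)
  obtain ⟨A, hA⟩ := IsAtomic.exists_atom (Submodule R M)
  obtain ⟨l, ⟨e⟩⟩ := Q.fullL (ModuleCat.of R A) (isSimpleModule_iff_isAtom.2 hA)
  exact ⟨l, ModuleCat.ofHom (A.subtype ∘ₗ e.symm.toLinearMap),
    (ModuleCat.mono_iff_injective _).2 (A.injective_subtype.comp e.symm.injective)⟩

theorem ext_one_L_subsingleton (hstd : Subsingleton (Ext (Q.std l) M 1)) [Module.Finite R M]
    (hmin : ∀ μ < l, ∀ a : Q.L μ ⟶ M, ¬ Mono a) : Subsingleton (Ext (Q.L l) M 1) := by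
  obtain ⟨q, _, hq⟩ := exists_std_to_L Q l
  refine ext_subsingleton_X₃_left (shortExact_kernel q)
    (ext_zero_subsingleton_iff.2 fun u => ?_) hstd
  by_contra hu
  have : Module.Finite R ↥(Abelian.image u) := finite_of_mono (Abelian.image.ι u)
  obtain ⟨μ, a, _⟩ := exists_mono_L Q (M := Abelian.image u) fun h =>
    hu (by rw [← Abelian.image.fac u, h.eq_of_tgt (Abelian.factorThruImage u) 0, zero_comp])
  have hμ : IsWeight Q μ (kernel q) :=
    ((isWeight_L Q μ).of_mono a).of_epi (Abelian.factorThruImage u)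
  exact hmin μ (hq μ hμ) (a ≫ Abelian.image.ι u) (mono_comp _ _)

/-- For `l` minimal among the weights of the socle of `M`, the inclusion of `L l` extends along
`L l ⟶ costd l`, and the extension is injective since `L l` is essential in `costd l`. -/
theorem exists_mono_costd [EnoughFGInjectives R] [Module.Finite R M] (hM : ¬ IsZero M)
    (hstd : ∀ μ, Subsingleton (Ext (Q.std μ) M 1)) : ∃ (l : Λ) (v : Q.costd l ⟶ M), Mono v := by
  obtain ⟨l, ⟨a, ha⟩, hmin⟩ := (Finite.to_wellFoundedLT (α := Λ)).wf.has_min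
    {l : Λ | ∃ a : Q.L l ⟶ M, Mono a} (exists_mono_L Q hM)
  obtain ⟨ι, hι⟩ := exists_isEssentialMono_costd Q l
  have := hι.mono
  have := finite_costd Q l
  have : Module.Finite R ↥(cokernel ι) := finite_of_epi (cokernel.π ι)
  have hext : Subsingleton (Ext (cokernel ι) M 1) :=
    ext_subsingleton_of_isFiniteLength (Q := Q)
      (isFiniteLength_of_finite (M := cokernel ι)) fun μ hμ =>
      ext_one_L_subsingleton (hstd μ) fun κ hκ b hb =>
        hmin κ ⟨b, hb⟩ (hκ.trans_le (hμ.of_epi (cokernel.π ι)).le_of_costd)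
  obtain ⟨v, hv⟩ := exists_extension_of_ext_one (shortExact_cokernel ι) hext a
  exact ⟨l, v, hι.mono_of_comp v (hv ▸ ha)⟩

theorem length_cokernel_lt [Module.Finite R N] (f : M ⟶ N) [Mono f] (hM : ¬ IsZero M) :
    Module.length R ↥(cokernel f) < Module.length R N := by
  have hS := shortExact_cokernel f
  have : Nontrivial M := not_subsingleton_iff_nontrivial.1 fun h =>
    hM (ModuleCat.isZero_of_subsingleton M)
  have : Module.Finite R ↥(cokernel f) := finite_of_epi (cokernel.π f)
  rw [Module.length_eq_add_of_exact _ _ hS.moduleCat_injective_f hS.moduleCat_surjective_g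
    (LinearMap.exact_iff.2 hS.exact.moduleCat_range_eq_ker.symm)]
  exact ENat.lt_add_left Module.length_ne_top Module.length_pos

theorem filtered_costd_of_ext_one [EnoughFGInjectives R] [Module.Finite R M]
    (hstd : ∀ μ, Subsingleton (Ext (Q.std μ) M 1)) : Filtered (.ofObj Q.costd) M := by
  induction hM : Module.length R M using WellFoundedLT.induction generalizing M with
  | ind n ih =>
    subst hM
    by_cases hM : IsZero M
    · exact .zero hM
    obtain ⟨l, v, _⟩ := exists_mono_costd hM hstd
    have hl : ¬ IsZero (Q.costd l) := fun h => by
      obtain ⟨ι, hι⟩ := exists_isEssentialMono_costd Q l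
      have := hι.mono
      exact Simple.not_isZero (Q.L l) (IsZero.of_mono ι h)
    have : Module.Finite R ↥(cokernel v) := finite_of_epi (cokernel.π v)
    have hcoker := ih _ (length_cokernel_lt v hl)
      (fun μ => ext_subsingleton_X₃_right (shortExact_cokernel v) (hstd μ)
        (ext_std_costd_subsingleton 1 μ l)) rfl
    exact .extension (shortExact_cokernel v) (.of (ObjectProperty.ofObj_apply _ l)) hcoker

theorem filtered_costd_of_injective [EnoughFGInjectives R] [Module.Finite R M] [Injective M] :
    Filtered (.ofObj Q.costd) M :=
  filtered_costd_of_ext_one fun μ => Ext.subsingleton_of_injective (Q.std μ) M 0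

end FiniteModules

section Dimension

variable {R : Type} [Ring R] {Λ : Type} [Fintype Λ] [PartialOrder Λ] {Q : QHData R Λ}
  {M N : ModuleCat.{0} R}

instance isClosedUnderIsomorphisms_isInjective :
    (isInjective (ModuleCat.{0} R)).IsClosedUnderIsomorphisms :=
  ⟨fun e h => Injective.of_iso e h⟩

theorem injdimLE_iff_hasCoresolution {d : ℕ} :
    InjdimLE R M d ↔ HasCoresolution (isInjective (ModuleCat.{0} R)) M d := by
  simp only [InjdimLE, Module.injective_iff_injective_object]
  exact exists_isExactSeq_iff_hasCoresolution

theorem gfdLE_iff_hasCoresolution {d : ℕ} :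
    GfdLE R Q M d ↔ HasCoresolution (Filtered (.ofObj Q.costd)) M d := by
  simp only [GfdLE, inCostdFilt_iff_filtered]
  exact exists_isExactSeq_iff_hasCoresolution

theorem gfd_eq_of_iso (e : M ≅ N) : gfd R Q M = gfd R Q N := by
  simp only [gfd, gfdLE_iff_hasCoresolution]
  exact congrArg sInf (Set.ext fun d => ⟨(·.of_iso e), (·.of_iso e.symm)⟩)

theorem injdimLE_iff_ext {d : ℕ} :
    InjdimLE R M d ↔ ∀ A : ModuleCat.{0} R, Subsingleton (Ext A M (d + 1)) :=
  injdimLE_iff_hasCoresolution.trans <| hasCoresolution_iff_ext (G := ⊤) (A := id)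
    (fun A D n (_ : Injective D) => Ext.subsingleton_of_injective A D n)
    (fun _ _ h => injective_iff_subsingleton_ext_one.2 h)
    (fun X _ => ⟨Injective.under X, Injective.ι X, inferInstance, Injective.injective_under X,
      trivial⟩) trivial d

theorem gfdLE_iff_ext [IsArtinianRing R] [EnoughFGInjectives R] [hM : Module.Finite R M] {d : ℕ} :
    GfdLE R Q M d ↔ ∀ μ, Subsingleton (Ext (Q.std μ) M (d + 1)) :=
  gfdLE_iff_hasCoresolution.trans <| hasCoresolution_iff_ext (G := ModuleCat.isFG R)
    (fun μ _ n hD => ext_filtered_subsingleton (.of (ObjectProperty.ofObj_apply _ μ)) hD n)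
    (fun X (_ : Module.Finite R X) h => filtered_costd_of_ext_one h)
    (fun X (_ : Module.Finite R X) => by
      obtain ⟨J, j, hj, _, _⟩ := EnoughFGInjectives.exists_mono X
      exact ⟨J, j, hj, filtered_costd_of_injective, finite_of_epi (cokernel.π j)⟩) hM d

end Dimension

section FiniteDimensional

variable (k : Type) [Field k] {R : Type} [Ring R] [Algebra k R]

open scoped ModuleCat

theorem finite_linearMap_of_finite [FiniteDimensional k R] (V W : ModuleCat.{0} R)
    [Module.Finite R V] [Module.Finite R W] : Module.Finite k (V →ₗ[R] W) := by
  have : Module.Finite k V := Module.Finite.trans R V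
  have : Module.Finite k W := Module.Finite.trans R W
  exact Module.Finite.of_injective (LinearMap.restrictScalarsₗ k R V W k)
    (LinearMap.restrictScalars_injective k)

theorem finite_restrictScalars [FiniteDimensional k R] (M : ModuleCat.{0} R) [Module.Finite R M] :
    Module.Finite k ((ModuleCat.restrictScalars.{0} (algebraMap k R)).obj M) := by
  have : Module.Finite k M := Module.Finite.trans R M
  exact this

theorem finite_coextendScalars [FiniteDimensional k R] (V : ModuleCat.{0} k) [Module.Finite k V] :
    Module.Finite R ((ModuleCat.coextendScalars.{0, 0, 0} (algebraMap k R)).obj V) := by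
  let R' := (ModuleCat.restrictScalars.{0} (algebraMap k R)).obj (ModuleCat.of R R)
  have : Module.Finite k R' := finite_restrictScalars k (ModuleCat.of R R)
  have : IsScalarTower k R (R' →ₗ[k] V) := ⟨fun c r φ => LinearMap.ext fun (x : R) => by
    have hx : x * (c • r) = algebraMap k R c * (x * r) := by
      rw [mul_smul_comm, Algebra.smul_def]
    exact (congrArg φ hx).trans (φ.map_smul c (x * r))⟩
  have : Module.Finite R (R' →ₗ[k] V) := .of_restrictScalars_finite k R _
  exact Module.Finite.equiv (ModuleCat.CoextendScalars.equiv (algebraMap k R) V).symm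

theorem enoughFGInjectives_of_finiteDimensional [FiniteDimensional k R] :
    EnoughFGInjectives R := by
  refine ⟨fun M _ => ?_⟩
  let adj := ModuleCat.restrictCoextendScalarsAdj.{0} (algebraMap k R)
  let V := (ModuleCat.restrictScalars.{0} (algebraMap k R)).obj M
  have := finite_restrictScalars k M
  have hV : Injective V :=
    (Module.injective_iff_injective_object _ _).1 (Module.injective_of_isSemisimpleRing k V)
  exact ⟨_, adj.unit.app M, adj.unit_mono_of_L_faithful M, adj.map_injective V hV,
    finite_coextendScalars k V⟩

theorem finiteDimensional_ringelDualRing [FiniteDimensional k R] (T : ModuleCat.{0} R)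
    [Module.Finite R T] : FiniteDimensional k (RingelDualRing R T) :=
  have := finite_linearMap_of_finite k T T
  Module.Finite.equiv (MulOpposite.opLinearEquiv k : Module.End R T ≃ₗ[k] _)

theorem finite_homTMod [FiniteDimensional k R] (T X : ModuleCat.{0} R)
    [Module.Finite R T] [Module.Finite R X] :
    Module.Finite (RingelDualRing R T) (homTMod R T X) := by
  have := finite_linearMap_of_finite k T X
  have : IsScalarTower k (RingelDualRing R T) (T →ₗ[R] X) :=
    ⟨fun c a φ => LinearMap.ext fun x => φ.map_smul_of_tower c (a.unop x)⟩
  exact Module.Finite.of_restrictScalars_finite k (RingelDualRing R T) (T →ₗ[R] X)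

end FiniteDimensional

section HomFunctor

variable {R : Type} [Ring R] {T X Y I : ModuleCat.{0} R}

/-- The functor `Hom(T, -)` from modules over `R` to modules over the opposite endomorphism ring
of `T`. -/
noncomputable def homFunctor (T : ModuleCat.{0} R) :
    ModuleCat.{0} R ⥤ ModuleCat.{0} (RingelDualRing R T) where
  obj X := homTMod R T X
  map {X Y} f := ModuleCat.ofHom
    { toFun := fun φ : ↥T →ₗ[R] ↥X => (f.hom ∘ₗ φ : ↥T →ₗ[R] ↥Y)
      map_add' := fun φ ψ => LinearMap.comp_add φ ψ f.hom
      map_smul' := fun _ _ => rfl }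

theorem homFunctor_map_apply (f : X ⟶ Y) (φ : T ⟶ X) :
    ((homFunctor T).map f).hom φ.hom = (φ ≫ f).hom := rfl

theorem homFunctor_map_eq_iff {f g : X ⟶ Y} :
    (homFunctor T).map f = (homFunctor T).map g ↔ ∀ φ : T ⟶ X, φ ≫ f = φ ≫ g := by
  refine ⟨fun h φ => ModuleCat.hom_ext ?_, fun h => ?_⟩
  · rw [← homFunctor_map_apply, h, homFunctor_map_apply]
  · ext φ
    exact congrArg ModuleCat.Hom.hom (h (ModuleCat.ofHom φ))

instance homFunctor_additive : (homFunctor T).Additive where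
  map_add {X Y f g} := by
    ext φ
    exact LinearMap.add_comp (φ : ↥T →ₗ[R] ↥X) g.hom f.hom

theorem homFunctor_map_shortExact {S : ShortComplex (ModuleCat.{0} R)} (hS : S.ShortExact)
    (h : Subsingleton (Ext T S.X₁ 1)) : (S.map (homFunctor T)).ShortExact := by
  have := hS.mono_f
  have hmono : Mono ((homFunctor T).map S.f) := by
    refine (ModuleCat.mono_iff_injective _).2 fun φ ψ hφ => ?_
    refine congrArg ModuleCat.Hom.hom (a₁ := ModuleCat.ofHom φ) (a₂ := ModuleCat.ofHom ψ) ?_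
    exact (cancel_mono S.f).1 (ModuleCat.hom_ext hφ)
  have hepi : Epi ((homFunctor T).map S.g) := by
    refine (ModuleCat.epi_iff_surjective _).2 fun φ => ?_
    obtain ⟨v, hv⟩ := exists_lift_of_ext_one hS h (ModuleCat.ofHom φ)
    exact ⟨v.hom, congrArg ModuleCat.Hom.hom hv⟩
  refine .mk' ((ShortComplex.moduleCat_exact_iff _).2 fun φ hφ => ?_) hmono hepi
  have hφ : ModuleCat.ofHom φ ≫ S.g = 0 := ModuleCat.hom_ext hφ
  exact ⟨(hS.exact.lift _ hφ).hom, congrArg ModuleCat.Hom.hom (hS.exact.lift_f _ hφ)⟩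

/-- `Hom(T, T)` is the regular module over the opposite endomorphism ring of `T`. -/
noncomputable def homFunctorObjSelfIso (T : ModuleCat.{0} R) :
    (homFunctor T).obj T ≅ ModuleCat.of (RingelDualRing R T) (RingelDualRing R T) :=
  LinearEquiv.toModuleIso
    { (MulOpposite.opAddEquiv : Module.End R T ≃+ _) with map_smul' := fun _ _ => rfl }

theorem projective_homFunctor_obj (r : Retract X T) : Projective ((homFunctor T).obj X) := by
  have : Projective (ModuleCat.of (RingelDualRing R T) (RingelDualRing R T)) :=
    (IsProjective.iff_projective _).1 inferInstance
  exact ((r.map (homFunctor T)).trans (.ofIso (homFunctorObjSelfIso T))).projective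

theorem exists_homFunctor_map_of_retract (r : Retract X T)
    (φ : (homFunctor T).obj X ⟶ (homFunctor T).obj Y) : ∃ f, (homFunctor T).map f = φ := by
  suffices h : ∀ ψ : (homFunctor T).obj T ⟶ (homFunctor T).obj Y,
      ∃ f, (homFunctor T).map f = ψ by
    obtain ⟨f, hf⟩ := h ((homFunctor T).map r.r ≫ φ)
    exact ⟨r.i ≫ f, by rw [Functor.map_comp, hf, ← Functor.map_comp_assoc, r.retract,
      CategoryTheory.Functor.map_id, Category.id_comp]⟩
  intro ψ
  refine ⟨ModuleCat.ofHom (ψ.hom (LinearMap.id : ↥T →ₗ[R] ↥T)), ?_⟩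
  refine ModuleCat.hom_ext (LinearMap.ext fun a : ↥T →ₗ[R] ↥T => ?_)
  exact (ψ.hom.map_smul (MulOpposite.op a) (LinearMap.id : ↥T →ₗ[R] ↥T)).symm

theorem exists_retract_of_retract_homFunctor {P : ModuleCat.{0} (RingelDualRing R T)}
    (r : Retract P ((homFunctor T).obj T)) :
    ∃ X, Nonempty (Retract X T) ∧ Nonempty (P ≅ (homFunctor T).obj X) := by
  obtain ⟨ε, hε⟩ := exists_homFunctor_map_of_retract (.refl T) (r.r ≫ r.i)
  have hidem : ε ≫ ε = ε := by
    have h : (homFunctor T).map (ε ≫ ε) = (homFunctor T).map ε := by simp [hε]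
    simpa using homFunctor_map_eq_iff.1 h (𝟙 T)
  obtain ⟨X, i, p, hip, hpi⟩ := IsIdempotentComplete.idempotents_split T ε hidem
  refine ⟨X, ⟨⟨i, p, hip⟩⟩, ⟨r.i ≫ (homFunctor T).map p, (homFunctor T).map i ≫ r.r, ?_, ?_⟩⟩
  · simp [← Functor.map_comp_assoc, hpi, hε]
  · rw [Category.assoc, ← Category.assoc r.r, ← hε, ← Functor.map_comp, ← Functor.map_comp, ← hpi]
    simp [hip]

end HomFunctor

section RelativeProgenerator

variable {R : Type} [Ring R] {P : ObjectProperty (ModuleCat.{0} R)} {T D X Y W J : ModuleCat.{0} R}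

/-- `T` is a relative progenerator for the modules filtered by `P`: it has no extensions by the
modules in `P`, and each of these is the cokernel of a monomorphism from a module filtered by `P`
to a direct summand of `T`. -/
structure IsRelativeProgenerator (P : ObjectProperty (ModuleCat.{0} R)) (T : ModuleCat.{0} R) :
    Prop where
  ext_one : ∀ {D}, P D → Subsingleton (Ext T D 1)
  presentation : ∀ {D}, P D → ∃ (K X : ModuleCat.{0} R) (i : K ⟶ X) (p : X ⟶ D) (w : i ≫ p = 0),
    (ShortComplex.mk i p w).ShortExact ∧ Filtered P K ∧ Nonempty (Retract X T)

namespace IsRelativeProgenerator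

theorem ext_one_of_filtered (hT : IsRelativeProgenerator P T) (hY : Filtered P Y) :
    Subsingleton (Ext T Y 1) :=
  hY.ext_subsingleton_right fun _ => hT.ext_one

theorem eq_zero_of_map_eq_zero (hT : IsRelativeProgenerator P T) (hY : Filtered P Y) {f : Y ⟶ W}
    (hf : (homFunctor T).map f = 0) : f = 0 := by
  induction hY with
  | zero hY => exact hY.eq_of_src f 0
  | @step S hS h₁ h₃ ih =>
    have := hS.epi_g
    obtain ⟨K, X, i, p, w, hp, -, ⟨r⟩⟩ := hT.presentation h₃
    have := hp.epi_g
    have hSf : S.f ≫ f = 0 := ih (by rw [Functor.map_comp, hf, comp_zero])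
    obtain ⟨v, hv⟩ := exists_lift_of_ext_one hS (hT.ext_one_of_filtered h₁) (r.r ≫ p)
    have hvf : v ≫ f = 0 := by
      simpa using homFunctor_map_eq_iff.1 (hf.trans (Functor.map_zero _ _ _).symm) v
    rw [← hS.exact.g_desc f hSf, ← Category.assoc, hv] at hvf
    rw [← hS.exact.g_desc f hSf, zero_of_epi_comp _ hvf, comp_zero]

theorem exists_map_eq_of_prop (hT : IsRelativeProgenerator P T) (hD : P D)
    (φ : (homFunctor T).obj D ⟶ (homFunctor T).obj W) : ∃ f, (homFunctor T).map f = φ := by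
  obtain ⟨K, X, i, p, w, hp, hK, ⟨r⟩⟩ := hT.presentation hD
  have := hp.epi_g
  have : Epi ((homFunctor T).map p) :=
    (homFunctor_map_shortExact hp (hT.ext_one_of_filtered hK)).epi_g
  obtain ⟨ψ, hψ⟩ := exists_homFunctor_map_of_retract r ((homFunctor T).map p ≫ φ)
  have hiψ : i ≫ ψ = 0 := hT.eq_zero_of_map_eq_zero hK <| by
    rw [Functor.map_comp, hψ, ← Functor.map_comp_assoc, w, Functor.map_zero, zero_comp]
  refine ⟨hp.exact.desc ψ hiψ, (cancel_epi ((homFunctor T).map p)).1 ?_⟩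
  rw [← hψ, ← Functor.map_comp, hp.exact.g_desc]

theorem exists_map_eq (hT : IsRelativeProgenerator P T) (hY : Filtered P Y) [Injective J]
    (φ : (homFunctor T).obj Y ⟶ (homFunctor T).obj J) : ∃ f, (homFunctor T).map f = φ := by
  induction hY with
  | zero hY => exact ⟨0, ((homFunctor T).map_isZero hY).eq_of_src _ _⟩
  | @step S hS h₁ h₃ ih =>
    have := hS.mono_f
    have hFS := homFunctor_map_shortExact hS (hT.ext_one_of_filtered h₁)
    obtain ⟨a, ha⟩ := ih ((homFunctor T).map S.f ≫ φ)
    let b : S.X₂ ⟶ J := Injective.factorThru a S.f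
    have hb : (homFunctor T).map S.f ≫ (φ - (homFunctor T).map b) = 0 := by
      rw [Preadditive.comp_sub, ← ha, ← Functor.map_comp, Injective.comp_factorThru, sub_self]
    have := hFS.epi_g
    obtain ⟨χ, hχ⟩ : ∃ χ, (homFunctor T).map S.g ≫ χ = φ - (homFunctor T).map b :=
      ⟨_, hFS.exact.g_desc _ hb⟩
    obtain ⟨c, rfl⟩ := hT.exists_map_eq_of_prop h₃ χ
    exact ⟨S.g ≫ c + b, by rw [Functor.map_add, Functor.map_comp, hχ, sub_add_cancel]⟩

theorem ext_map_subsingleton_left (hT : IsRelativeProgenerator P T)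
    {Z : ModuleCat.{0} (RingelDualRing R T)} {n : ℕ}
    (h : ∀ {D}, P D → Subsingleton (Ext ((homFunctor T).obj D) Z n)) (hY : Filtered P Y) :
    Subsingleton (Ext ((homFunctor T).obj Y) Z n) := by
  induction hY with
  | zero hY => exact ext_subsingleton_of_isZero_left ((homFunctor T).map_isZero hY)
  | step hS h₁ h₃ ih =>
    exact ext_subsingleton_X₂_left (homFunctor_map_shortExact hS (hT.ext_one_of_filtered h₁)) ih
      (h h₃)

theorem ext_map_injective_subsingleton (hT : IsRelativeProgenerator P T) (hY : Filtered P Y)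
    [Injective J] (n : ℕ) :
    Subsingleton (Ext ((homFunctor T).obj Y) ((homFunctor T).obj J) (n + 1)) := by
  induction n generalizing Y with
  | zero =>
    refine hT.ext_map_subsingleton_left (fun {D} hD => ?_) hY
    obtain ⟨K, X, i, p, w, hp, hK, ⟨r⟩⟩ := hT.presentation hD
    have : Mono i := hp.mono_f
    have := projective_homFunctor_obj r
    refine ext_one_subsingleton_of_extensions
      (homFunctor_map_shortExact hp (hT.ext_one_of_filtered hK))
      (Ext.subsingleton_of_projective ((homFunctor T).obj X) _ 0) fun φ => ?_
    obtain ⟨f, rfl⟩ := hT.exists_map_eq hK φ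
    refine ⟨(homFunctor T).map (Injective.factorThru f i), ?_⟩
    exact ((homFunctor T).map_comp i _).symm.trans (by rw [Injective.comp_factorThru])
  | succ n ih =>
    refine hT.ext_map_subsingleton_left (fun {D} hD => ?_) hY
    obtain ⟨K, X, i, p, w, hp, hK, ⟨r⟩⟩ := hT.presentation hD
    have := projective_homFunctor_obj r
    exact ext_subsingleton_X₃_left (homFunctor_map_shortExact hp (hT.ext_one_of_filtered hK))
      (ih hK) (Ext.subsingleton_of_projective ((homFunctor T).obj X) _ (n + 1))

theorem injective_of_ext_one_map (hT : IsRelativeProgenerator P T)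
    {S : ShortComplex (ModuleCat.{0} R)} (hS : S.ShortExact) (h₁ : Filtered P S.X₁)
    [Injective S.X₂] (h₃ : Filtered P S.X₃)
    (h : ∀ {D}, P D → Subsingleton (Ext ((homFunctor T).obj D) ((homFunctor T).obj S.X₁) 1)) :
    Injective S.X₁ := by
  have hFS := homFunctor_map_shortExact hS (hT.ext_one_of_filtered h₁)
  obtain ⟨σ, hσ⟩ := exists_lift_of_ext_one hFS (hT.ext_map_subsingleton_left h h₃) (𝟙 _)
  obtain ⟨s, rfl⟩ := hT.exists_map_eq h₃ σ
  have hs : s ≫ S.g = 𝟙 _ := sub_eq_zero.1 <| hT.eq_zero_of_map_eq_zero h₃ <| by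
    rw [Functor.map_sub, Functor.map_comp, CategoryTheory.Functor.map_id]
    exact sub_eq_zero.2 hσ
  let split := ShortComplex.Splitting.ofExactOfSection S hS.exact s hs hS.mono_f
  exact (Retract.mk S.f split.r split.f_r).injective

theorem forall_ext_subsingleton_iff (hT : IsRelativeProgenerator P T)
    (hinj : ∀ {Y}, Filtered P Y → ∃ (J : ModuleCat.{0} R) (j : Y ⟶ J), Mono j ∧ Injective J ∧
      Filtered P (cokernel j))
    (hX : Filtered P X) (d : ℕ) :
    (∀ A : ModuleCat.{0} R, Subsingleton (Ext A X (d + 1))) ↔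
      ∀ D, P D → Subsingleton (Ext ((homFunctor T).obj D) ((homFunctor T).obj X) (d + 1)) := by
  induction d generalizing X with
  | zero =>
    obtain ⟨J, j, _, _, hC⟩ := hinj hX
    refine ⟨fun h D hD => ?_, fun h A => ?_⟩
    · have := injective_iff_subsingleton_ext_one.2 h
      exact hT.ext_map_injective_subsingleton (.of hD) 0
    · have : Injective X := hT.injective_of_ext_one_map (shortExact_cokernel j) hX hC (h _)
      exact Ext.subsingleton_of_injective A X 0
  | succ d ih =>
    obtain ⟨J, j, _, _, hC⟩ := hinj hX
    have hS := shortExact_cokernel j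
    have hFS := homFunctor_map_shortExact hS (hT.ext_one_of_filtered hX)
    have hJ (n : ℕ) {D} (hD : P D) := hT.ext_map_injective_subsingleton (J := J) (.of hD) n
    refine ⟨fun h D hD => ?_, fun h A => ?_⟩
    · refine ext_subsingleton_X₁_right hFS ((ih hC).1 (fun A => ?_) D hD) (hJ (d + 1) hD)
      exact ext_subsingleton_X₃_right hS (Ext.subsingleton_of_injective A J d) (h A)
    · refine ext_subsingleton_X₁_right hS ((ih hC).2 (fun D hD => ?_) A)
        (Ext.subsingleton_of_injective A J (d + 1))
      exact ext_subsingleton_X₃_right hFS (hJ d hD) (h D hD)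

end IsRelativeProgenerator

end RelativeProgenerator

section RingelDual

variable {R : Type} [Ring R] {Λ : Type} [Fintype Λ] [PartialOrder Λ] {Q : QHData R Λ}
  {T X Y : ModuleCat.{0} R}

theorem exists_epi_to_P (Q : QHData R Λ) (l : Λ) : ∃ s : ModuleCat.of R R ⟶ Q.P l, Epi s := by
  obtain ⟨π, _, hfac⟩ := exists_projCover_map Q l
  have := Q.simpleL l
  have := IsSimpleModule.nontrivial R (Q.L l)
  obtain ⟨x, hx⟩ := exists_ne (0 : Q.L l)
  obtain ⟨y, rfl⟩ := (ModuleCat.epi_iff_surjective π).1 ‹_› x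
  let s : ModuleCat.of R R ⟶ Q.P l := ModuleCat.ofHom (LinearMap.toSpanSingleton R _ y)
  refine ⟨s, Preadditive.epi_of_cokernel_zero ?_⟩
  by_contra hs
  obtain ⟨v, hv⟩ := hfac (cokernel.π s) hs
  have hsπ : s ≫ π = 0 := by rw [← hv, cokernel.condition_assoc, zero_comp]
  exact hx <| by simpa [s] using LinearMap.congr_fun (congrArg ModuleCat.Hom.hom hsπ) (1 : R)

theorem exists_retract_iso_P (Q' : QHData (RingelDualRing R T) Λ) (l : Λ) :
    ∃ X, Nonempty (Retract X T) ∧ Nonempty (Q'.P l ≅ (homFunctor T).obj X) := by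
  obtain ⟨s, _⟩ := exists_epi_to_P Q' l
  refine exists_retract_of_retract_homFunctor (.trans ?_ (.ofIso (homFunctorObjSelfIso T).symm))
  exact ⟨Projective.factorThru (𝟙 _) s, s, Projective.factorThru_comp _ _⟩

variable [IsArtinianRing R] [EnoughFGInjectives R]

theorem finite_of_filtered_costd (hY : Filtered (.ofObj Q.costd) Y) : Module.Finite R Y := by
  induction hY with
  | zero hY =>
    have := ModuleCat.isZero_iff_subsingleton.1 hY
    infer_instance
  | @step S hS _ h₃ ih =>
    have : Module.Finite R S.X₃ := by
      generalize S.X₃ = D at h₃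
      obtain ⟨l⟩ := h₃
      exact finite_costd Q l
    exact .of_exact (LinearMap.exact_iff.2 hS.exact.moduleCat_range_eq_ker.symm)
      hS.moduleCat_surjective_g

theorem filtered_costd_of_retract [Module.Finite R T] (hT : Filtered (.ofObj Q.costd) T)
    (r : Retract X T) : Filtered (.ofObj Q.costd) X := by
  have : Module.Finite R X := finite_of_epi r.r
  exact filtered_costd_of_ext_one fun μ => ext_subsingleton_of_retract_right r <|
    ext_filtered_subsingleton (.of (ObjectProperty.ofObj_apply _ μ)) hT 0

theorem exists_mono_injective_filtered_cokernel (hY : Filtered (.ofObj Q.costd) Y) :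
    ∃ (J : ModuleCat.{0} R) (j : Y ⟶ J), Mono j ∧ Injective J ∧
      Filtered (.ofObj Q.costd) (cokernel j) := by
  have := finite_of_filtered_costd hY
  obtain ⟨J, j, _, _, _⟩ := EnoughFGInjectives.exists_mono Y
  have := finite_of_epi (cokernel.π j)
  refine ⟨J, j, ‹_›, ‹_›, filtered_costd_of_ext_one fun μ => ?_⟩
  exact ext_subsingleton_X₃_right (shortExact_cokernel j) (Ext.subsingleton_of_injective _ J 0)
    (ext_filtered_subsingleton (.of (ObjectProperty.ofObj_apply _ μ)) hY 1)

theorem exists_presentation_costd [Module.Finite R T] (hT : IsTilting R Q T)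
    (Q' : QHData (RingelDualRing R T) Λᵒᵈ)
    (hstd : ∀ l, Nonempty (Q'.std (OrderDual.toDual l) ≅ (homFunctor T).obj (Q.costd l))) (l : Λ) :
    ∃ (K X : ModuleCat.{0} R) (i : K ⟶ X) (p : X ⟶ Q.costd l) (w : i ≫ p = 0),
      (ShortComplex.mk i p w).ShortExact ∧ Filtered (.ofObj Q.costd) K ∧
        Nonempty (Retract X T) := by
  obtain ⟨X, ⟨r⟩, ⟨e⟩⟩ := exists_retract_iso_P Q' (OrderDual.toDual l)
  cases filtered_costd_of_retract (inCostdFilt_iff_filtered.1 hT.2) r with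
  | zero hX =>
    obtain ⟨π, _, -⟩ := exists_projCover_map Q' (OrderDual.toDual l)
    have hP := ((homFunctor T).map_isZero hX).of_iso e
    exact (Simple.not_isZero _ (IsZero.of_epi π hP)).elim
  | @step S hS h₁ h₃ =>
    obtain @⟨K, X, D, i, p, w⟩ := S
    obtain ⟨m⟩ := h₃
    have hF := homFunctor_map_shortExact hS <|
      ext_filtered_subsingleton (inStdFilt_iff_filtered.1 hT.1) h₁ 0
    have : Epi ((homFunctor T).map p) := hF.epi_g
    obtain ⟨e'⟩ := hstd m
    obtain rfl : m = l := OrderDual.toDual.injective <|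
      eq_of_epi_P_to_std (e.hom ≫ (homFunctor T).map p ≫ e'.inv)
    exact ⟨K, X, i, p, w, hS, h₁, ⟨r⟩⟩

theorem isRelativeProgenerator_of_isTilting [Module.Finite R T] (hT : IsTilting R Q T)
    (Q' : QHData (RingelDualRing R T) Λᵒᵈ)
    (hstd : ∀ l, Nonempty (Q'.std (OrderDual.toDual l) ≅ (homFunctor T).obj (Q.costd l))) :
    IsRelativeProgenerator (.ofObj Q.costd) T where
  ext_one hD := ext_filtered_subsingleton (inStdFilt_iff_filtered.1 hT.1) (.of hD) 0
  presentation := by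
    rintro _ ⟨l⟩
    exact exists_presentation_costd hT Q' hstd l

end RingelDual

end QHPaper

open QHPaper in
open scoped ModuleCat in
theorem stmt6_general (k S Λ : Type) [Field k] [Ring S] [Algebra k S] [FiniteDimensional k S]
    [Fintype Λ] [PartialOrder Λ] (QH : QHData S Λ) (T : ModuleCat.{0} S) [Module.Finite S T]
    (QH' : QHData (RingelDualRing S T) Λᵒᵈ) (hT : IsTilting S QH T)
    (hstd : ∀ l, Nonempty (QH'.std (OrderDual.toDual l) ≅ homTMod S T (QH.costd l)))
    (X : ModuleCat.{0} S) (hX : InCostdFilt S QH X) :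
    injdim S X = gfd (RingelDualRing S T) QH' (homTMod S T X) := by
  have := IsArtinianRing.of_finite k S
  have := enoughFGInjectives_of_finiteDimensional k (R := S)
  have := finiteDimensional_ringelDualRing k T
  have := IsArtinianRing.of_finite k (RingelDualRing S T)
  have := enoughFGInjectives_of_finiteDimensional k (R := RingelDualRing S T)
  have hX := inCostdFilt_iff_filtered.1 hX
  have := finite_of_filtered_costd hX
  have := finite_homTMod k T X
  have hprog := isRelativeProgenerator_of_isTilting hT QH' hstd
  refine congrArg sInf (Set.ext fun d => ?_)
  refine injdimLE_iff_ext.trans <| .trans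
    (hprog.forall_ext_subsingleton_iff exists_mono_injective_filtered_cokernel hX d) <|
    .trans ?_ gfdLE_iff_ext.symm
  refine ⟨fun h μ => ?_, ?_⟩
  · obtain ⟨e⟩ := hstd (OrderDual.ofDual μ)
    exact ext_subsingleton_of_retract_left (.ofIso e) (h _ ⟨OrderDual.ofDual μ⟩)
  · rintro h _ ⟨l⟩
    obtain ⟨e⟩ := hstd l
    exact ext_subsingleton_of_retract_left (.ofIso e.symm) (h _)

open QHPaper in
/-- Let `S` be a quasi-hereditary algebra with Ringel dual `S'`. For every
`lam ∈ Λ⁺`, the injective dimension of the costandard module `∇(lam)` of `S` equals the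
∇-filtration dimension of the standard module `Δ'(lam)` of `S'`. -/
theorem stmt6 (k S Λ : Type) [Field k] [Ring S] [Algebra k S] [FiniteDimensional k S]
    [Fintype Λ] [PartialOrder Λ]
    (QH : QHData S Λ) (T : ModuleCat.{0} S)
    (QH' : QHData (RingelDualRing S T) Λᵒᵈ)
    (hRD : IsRingelDualData S QH T QH') (lam : Λ) :
    injdim S (QH.costd lam) =
      gfd (RingelDualRing S T) QH' (QH'.std (OrderDual.toDual lam)) := by
  obtain ⟨⟨hT, _, -⟩, hstd⟩ := hRD
  have hiso (l : Λ) : Nonempty (QH'.std (OrderDual.toDual l) ≅ homTMod S T (QH.costd l)) :=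
    (hstd l).map LinearEquiv.toModuleIso
  rw [gfd_eq_of_iso (hiso lam).some]
  exact stmt6_general k S Λ QH T QH' hT hiso _ <|
    inCostdFilt_iff_filtered.2 (.of (ObjectProperty.ofObj_apply _ lam))
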